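/- arXiv:2509.03197 — 3 statements merged into one kernel-verified Lean document; each statement's English description precedes it below -/
import Mathlib

section
/- Let ψ be a Dirichlet character modulo 4 or 8 (so that ψ(2) = 0), let k ≥ 1 be an integer, N ≥ 1, and let s, t ∈ ℂ with Re s > 1 and Re t > 0. Let χ denote the Dirichlet character modulo 8k·q (with q the modulus of ψ) whose value at odd m is (Jacobi symbol (k|m))·ψ(m) and 0 at even m (this is the character (4k/·)·ψ). Then the series on the left converges absolutely and Σ_{n odd ≥ 1} G((·/n),k) · ψ(n) · a_t(n) · n^{−(s+1/2)} = ( ∏_{j=0}^{N} L(s+jt, χ)/L(2s+2jt, χ²) ) · E_N(s,t;χ) · P(s,t,k;ψ), where P(s,t,k;ψ) := ∏_{p | k, p odd prime} (1 + a_t(p)·Σ_{j ≥ 1} G((·/p^j),k)·ψ(p^j)·p^{−j(s+1/2)}), the inner sums having only finitely many nonzero terms since G((·/p^j),k) = 0 for j ≥ v_p(k)+2. -/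
open Complex

noncomputable section

/-- Gauss sum `τ((·/n),k)` of the Jacobi-symbol character mod `n` (`n` odd). -/
def jacobiTau (n k : ℕ) : ℂ :=
  ∑ j ∈ Finset.range n, ((jacobiSym (j : ℤ) n : ℤ) : ℂ) *
    Complex.exp (2 * Real.pi * Complex.I * j * k / n)

/-- Modified Gauss sum `G((·/n),k)`. -/
def jacobiG (n k : ℕ) : ℂ :=
  ((1 - Complex.I) / 2 + ((jacobiSym (-1 : ℤ) n : ℤ) : ℂ) * (1 + Complex.I) / 2) * jacobiTau n k

/-- `a_t(m) = ∏_{p | m} (1 - p^{-t})^{-1}`. -/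
def aF (t : ℂ) (m : ℕ) : ℂ := ∏ p ∈ m.primeFactors, (1 - (p : ℂ) ^ (-t))⁻¹

/-- The Euler products `E_N(s,t;f)`. -/
def Erec (f : ℕ → ℂ) (s t : ℂ) : ℕ → ℂ
  | 0 => 1
  | 1 => ∏' p : Nat.Primes,
      (1 + (f p * ((p : ℕ) : ℂ) ^ s - (f p) ^ 2 * ((p : ℕ) : ℂ) ^ t + (f p) ^ 2) /
        ((((p : ℕ) : ℂ) ^ (s + t) + f p) * (((p : ℕ) : ℂ) ^ s + f p) * (((p : ℕ) : ℂ) ^ t - 1)))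
  | (N + 2) => Erec f s t (N + 1) *
      ∏' p : Nat.Primes, (1 + f p * ((p : ℕ) : ℂ) ^ (-(s + ((N : ℕ) + 2) * t)))⁻¹

/-- The finite Euler product `P(s,t,k;ψ)` over odd primes dividing `k`. -/
def Pkt (s t : ℂ) (k : ℕ) (ψf : ℕ → ℂ) : ℂ :=
  ∏ p ∈ k.primeFactors.filter (fun p => p ≠ 2),
    (1 + aF t p * ∑' j : ℕ, if 1 ≤ j then
      jacobiG (p ^ j) k * ψf (p ^ j) * ((p : ℂ)) ^ (-(j : ℂ) * (s + 1 / 2)) else 0)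

section GaussSign
open Filter Topology

lemma hasSum_congr_eq {f g : ℤ → ℂ} {a b : ℂ} (h : HasSum g b) (hf : f = g) (hab : a = b) :
    HasSum f a := by rw [hf, hab]; exact h

lemma gs_class_sum (M : ℕ) (hM : M ≠ 0) (r : ℤ) (w : ℂ) (hw : 0 < w.re) :
    HasSum (fun l : ℤ => cexp (-Real.pi * w * ((l * M + r : ℤ) : ℂ) ^ 2))
      (1 / (w * M ^ 2) ^ (1 / 2 : ℂ) * jacobiTheta₂ (r / M) (I / (w * M ^ 2))) := by
  have hM' : (M : ℂ) ≠ 0 := by exact_mod_cast hM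
  have hw0 : w ≠ 0 := by rintro rfl; simp at hw
  have him : 0 < (I * w * M ^ 2).im := by
    have : (I * w * M ^ 2).im = w.re * (M : ℝ) ^ 2 := by
      have : I * w * (M : ℂ) ^ 2 = ((M ^ 2 : ℝ) : ℂ) * (I * w) := by push_cast; ring
      rw [this, Complex.im_ofReal_mul]; simp; ring
    rw [this]; positivity
  have h := (hasSum_jacobiTheta₂_term (I * w * M * r) him).mul_left (cexp (-Real.pi * w * r ^ 2))
  refine (hasSum_congr_eq h ?_ ?_)
  · ext l
    rw [jacobiTheta₂_term, ← Complex.exp_add]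
    congr 1
    push_cast
    linear_combination (-(2 * Real.pi * l * w * M * r + Real.pi * l ^ 2 * w * M ^ 2) : ℂ) * I_sq
  · rw [jacobiTheta₂_functional_equation (I * w * M * r)]
    have e1 : -I * (I * w * M ^ 2) = w * M ^ 2 := by linear_combination (-w * M ^ 2) * I_sq
    have e2 : (I * w * M * r) / (I * w * M ^ 2) = r / M := by
      field_simp
    have e3 : -1 / (I * w * M ^ 2) = I / (w * M ^ 2) := by
      field_simp; simp
    have e4 : cexp (-Real.pi * w * r ^ 2) * cexp (-Real.pi * I * (I * w * M * r) ^ 2 / (I * w * M ^ 2)) = 1 := by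
      rw [← Complex.exp_add, Complex.exp_eq_one_iff]
      refine ⟨0, ?_⟩
      field_simp
      simp
    rw [e1, e2, e3]
    linear_combination (-(1 / (w * M ^ 2) ^ (1 / 2 : ℂ) * jacobiTheta₂ (r / M) (I / (w * M ^ 2)))) * e4

lemma gs_theta_lim {α : Type*} {F : Filter α} (z : ℝ) (τ : α → ℂ)
    (h : Tendsto (fun a => (τ a).im) F atTop) :
    Tendsto (fun a => jacobiTheta₂ z (τ a)) F (𝓝 1) := by
  have key : Tendsto (fun a => ∑' n : ℤ, jacobiTheta₂_term n z (τ a)) F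
      (𝓝 (∑' n : ℤ, if n = 0 then 1 else 0)) := by
    apply tendsto_tsum_of_dominated_convergence (bound := fun n : ℤ => ‖jacobiTheta₂_term n 0 I‖)
    · exact ((summable_jacobiTheta₂_term_iff 0 I).2 (by simp)).norm
    · intro n
      by_cases hn : n = 0
      · subst hn; simp [jacobiTheta₂_term, tendsto_const_nhds]
      · simp only [hn, if_false]
        rw [tendsto_zero_iff_norm_tendsto_zero]
        simp only [norm_jacobiTheta₂_term]
        apply Real.tendsto_exp_atBot.comp
        simp only [Complex.ofReal_im, mul_zero, sub_zero]
        apply Tendsto.const_mul_atTop_of_neg _ h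
        have : (0:ℝ) < (n:ℝ) ^ 2 := by positivity
        nlinarith [Real.pi_pos]
    · filter_upwards [h.eventually_ge_atTop 1] with a ha n
      simp only [norm_jacobiTheta₂_term]
      apply Real.exp_le_exp.2
      simp only [Complex.ofReal_im, mul_zero, sub_zero, Complex.zero_im, Complex.I_im]
      have : 0 ≤ Real.pi * (n:ℝ) ^ 2 := by positivity
      nlinarith
  simpa [jacobiTheta₂] using key

lemma gs_periodic {α : Type*} {F : Filter α} (M : ℕ) (hM : M ≠ 0) (c : ℤ → ℂ)
    (hc : ∀ l r : ℤ, c (l * M + r) = c r) (w : α → ℂ) (hw : ∀ᶠ a in F, 0 < (w a).re)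
    (h : Tendsto (fun a => ((w a)⁻¹).re) F atTop) :
    Tendsto (fun a => (w a * M ^ 2) ^ (1 / 2 : ℂ) *
      ∑' m : ℤ, c m * cexp (-Real.pi * w a * (m : ℂ) ^ 2)) F (𝓝 (∑ r ∈ Finset.range M, c r)) := by
  have : NeZero M := ⟨hM⟩
  have hM' : (M : ℂ) ≠ 0 := by exact_mod_cast hM
  have key : Tendsto (fun a => ∑ r : Fin M, c (r : ℕ) *
      jacobiTheta₂ (((r : ℕ) / M : ℝ) : ℂ) (I / (w a * M ^ 2))) F (𝓝 (∑ r : Fin M, c (r : ℕ) * 1)) := by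
    apply tendsto_finsetSum
    intro r _
    apply Tendsto.const_mul
    apply gs_theta_lim
    have : (fun a => (I / (w a * M ^ 2)).im) = fun a => ((w a)⁻¹).re * ((M:ℝ) ^ 2)⁻¹ := by
      ext a
      have : I / (w a * M ^ 2) = ((((M:ℝ) ^ 2)⁻¹ : ℝ) : ℂ) * (I * (w a)⁻¹) := by
        push_cast
        rw [div_eq_mul_inv, mul_inv]; ring
      rw [this, Complex.im_ofReal_mul, Complex.I_mul_im]; ring
    rw [this]
    exact h.atTop_mul_const (by positivity)
  simp only [mul_one] at key
  rw [Finset.sum_range]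
  refine key.congr' ?_
  filter_upwards [hw] with a ha
  have hw0 : w a ≠ 0 := by intro h0; simp [h0] at ha
  have hs : HasSum (fun m : ℤ => c m * cexp (-Real.pi * w a * (m : ℂ) ^ 2))
      (∑ r : Fin M, c (r : ℕ) * (1 / (w a * M ^ 2) ^ (1 / 2 : ℂ) *
        jacobiTheta₂ (((r : ℕ) : ℤ) / M) (I / (w a * M ^ 2)))) := by
    rw [← (Int.divModEquiv M).symm.hasSum_iff, ← (Equiv.prodComm _ _).hasSum_iff]
    have hfib : ∀ r : Fin M, HasSum (fun l : ℤ => c ((l * M + (r : ℕ) : ℤ)) *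
        cexp (-Real.pi * w a * ((l * M + (r : ℕ) : ℤ) : ℂ) ^ 2))
        (c (r : ℕ) * (1 / (w a * M ^ 2) ^ (1 / 2 : ℂ) *
        jacobiTheta₂ (((r : ℕ) : ℤ) / M) (I / (w a * M ^ 2)))) := by
      intro r
      simp only [hc]
      exact (gs_class_sum M hM (r : ℕ) (w a) ha).mul_left _
    have hsm : Summable (((fun m : ℤ => c m * cexp (-Real.pi * w a * (m : ℂ) ^ 2)) ∘
        (Int.divModEquiv M).symm) ∘ (Equiv.prodComm (Fin M) ℤ)) := by
      rw [← summable_norm_iff, summable_prod_of_nonneg (fun _ => norm_nonneg _)]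
      refine ⟨fun r => ?_, (hasSum_fintype _).summable⟩
      exact (hfib r).summable.norm
    have h2 := hsm.hasSum.prod_fiberwise (fun r => hfib r)
    have h3 := hasSum_fintype (fun r : Fin M => (c (r : ℕ) * (1 / (w a * M ^ 2) ^ (1 / 2 : ℂ) *
        jacobiTheta₂ (((r : ℕ) : ℤ) / M) (I / (w a * M ^ 2)))))
    rw [← h2.unique h3]
    exact hsm.hasSum
  rw [hs.tsum_eq, Finset.mul_sum]
  refine Finset.sum_congr rfl fun r _ => ?_
  have h0 : (w a * M ^ 2) ^ (1 / 2 : ℂ) ≠ 0 := by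
    rw [Complex.cpow_ne_zero_iff_of_exponent_ne_zero (by norm_num)]
    exact mul_ne_zero hw0 (pow_ne_zero _ hM')
  push_cast
  field_simp

lemma gs_value (n : ℕ) (hn : n ≠ 0) :
    (∑ r ∈ Finset.range n, cexp (2 * Real.pi * I * (r : ℂ) ^ 2 / n)) * (1 - I) =
      Real.sqrt n * (1 + cexp (-Real.pi * I * n / 2)) := by
  have hn' : (n : ℂ) ≠ 0 := by exact_mod_cast hn
  have hnr : (0 : ℝ) < n := by positivity
  set F : Filter ℝ := 𝓝[>] 0
  have hF : ∀ᶠ e : ℝ in F, 0 < e := self_mem_nhdsWithin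
  let a : ℝ → ℂ := fun e => e - 2 * I / n
  let w : ℝ → ℂ := fun e => -(I * n * e) / (2 * a e)
  have hare : ∀ e, (a e).re = e := by
    intro e
    have : (2 * I / (n:ℂ)) = ((2 / n : ℝ) : ℂ) * I := by push_cast; ring
    simp [a, this]
  have ha0 : ∀ e, 0 < e → a e ≠ 0 := by
    intro e he h0
    have := hare e
    rw [h0] at this; simp at this; exact he.ne this
  have hwinv : ∀ e, 0 < e → (w e)⁻¹ = 2 * I / n + 4 / (n ^ 2 * e) := by
    intro e he
    have he' : (e : ℂ) ≠ 0 := by exact_mod_cast he.ne'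
    have := ha0 e he
    simp only [w]
    rw [inv_div]
    simp only [a]
    field_simp
    ring_nf
    simp
  have hwre : ∀ e, 0 < e → ((w e)⁻¹).re = 4 / (n ^ 2 * e) := by
    intro e he
    rw [hwinv e he]
    have h1 : (2 * I / (n:ℂ)) = ((2 / n : ℝ) : ℂ) * I := by push_cast; ring
    have h2 : (4 / ((n:ℂ) ^ 2 * e)) = ((4 / (n ^ 2 * e) : ℝ) : ℂ) := by push_cast; ring
    rw [h1, h2, Complex.add_re, Complex.ofReal_re]; simp
  have hatF : Tendsto (fun e : ℝ => e⁻¹) F atTop := tendsto_inv_nhdsGT_zero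
  -- first asymptotics
  have A1 := gs_periodic (F := F) n hn (fun m => cexp (2 * Real.pi * I * (m : ℂ) ^ 2 / n)) (by
      intro l r
      rw [Complex.exp_eq_exp_iff_exists_int]
      refine ⟨l ^ 2 * n + 2 * l * r, ?_⟩
      push_cast
      field_simp
      ring) (fun e => (e : ℂ)) (by filter_upwards [hF] with e he; simpa using he) (by
        simp only [← Complex.ofReal_inv, Complex.ofReal_re]; exact hatF)
  have A2 := gs_periodic (F := F) 2 two_ne_zero (fun m => cexp (-Real.pi * I * n * (m : ℂ) ^ 2 / 2)) (by
      intro l r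
      rw [Complex.exp_eq_exp_iff_exists_int]
      refine ⟨-(n * l ^ 2 + n * l * r), ?_⟩
      push_cast
      ring) w (by
        filter_upwards [hF] with e he
        have h1 := hwre e he
        have h2 : 0 < ((w e)⁻¹).re := by rw [h1]; positivity
        rw [Complex.inv_re] at h2
        by_contra hcon
        exact absurd h2 (not_lt.2 (div_nonpos_of_nonpos_of_nonneg (not_lt.1 hcon) (Complex.normSq_nonneg _)))) (by
        have h3 : Tendsto (fun e : ℝ => 4 / (n:ℝ) ^ 2 * e⁻¹) F atTop :=
          hatF.const_mul_atTop (by positivity)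
        refine h3.congr' ?_
        filter_upwards [hF] with e he
        rw [hwre e he]
        field_simp)
  -- u
  let u : ℝ → ℂ := fun e => -(2 * I) / (n * a e)
  have halim : Tendsto a F (𝓝 (-(2 * I) / n)) := by
    have : Continuous a := by fun_prop
    have h := this.tendsto 0
    have e0 : a 0 = -(2 * I) / n := by simp [a]; ring
    rw [e0] at h
    exact h.mono_left nhdsWithin_le_nhds
  have hL0 : (-(2 * I) / n : ℂ) ≠ 0 := by simp [hn]
  have hulim : Tendsto u F (𝓝 1) := by
    have h := (tendsto_const_nhds (x := (-(2 * I) : ℂ))).div (halim.const_mul (n : ℂ))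
      (mul_ne_zero hn' hL0)
    have e1 : (-(2 * I) / (n * (-(2 * I) / n)) : ℂ) = 1 := by
      rw [mul_div_cancel₀ _ hn', div_self]; simp
    rw [e1] at h
    exact h
  have hus : Tendsto (fun e => (u e) ^ (1 / 2 : ℂ)) F (𝓝 1) := by
    have h := hulim.cpow (tendsto_const_nhds (x := (1 / 2 : ℂ))) (by simp)
    simpa using h
  have hslit : (-(2 * I) / n : ℂ) ∈ Complex.slitPlane := by
    right
    have h1 : (-(2 * I) / (n:ℂ)) = ((-2 / n : ℝ) : ℂ) * I := by push_cast; ring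
    rw [h1, Complex.im_ofReal_mul]; simp [hn]
  have has : Tendsto (fun e => (a e) ^ (1 / 2 : ℂ)) F (𝓝 ((-(2 * I) / n) ^ (1 / 2 : ℂ))) :=
    halim.cpow (tendsto_const_nhds (x := (1 / 2 : ℂ))) hslit
  have B1 := (A1.mul has).mul hus
  have hEq := tendsto_nhds_unique B1 (A2.congr' (by
    filter_upwards [hF] with e he
    have hae := ha0 e he
    have he' : (e : ℂ) ≠ 0 := by exact_mod_cast he.ne'
    have hu0 : u e ≠ 0 := by simp [u, hae, hn]
    have hw4 : w e * ((2:ℕ):ℂ) ^ 2 = ((e * n ^ 2 : ℝ) : ℂ) * u e := by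
      simp only [w, u]; push_cast; field_simp
    have hpos : 0 < e * (n:ℝ) ^ 2 := by positivity
    have hcp : (w e * ((2:ℕ):ℂ) ^ 2) ^ (1 / 2 : ℂ) = ((e:ℂ) * n ^ 2) ^ (1 / 2 : ℂ) * (u e) ^ (1 / 2 : ℂ) := by
      have hh : ((e:ℂ) * n ^ 2) = ((e * n ^ 2 : ℝ) : ℂ) := by push_cast; ring
      rw [hw4, hh, Complex.cpow_def_of_ne_zero (mul_ne_zero (by exact_mod_cast hpos.ne') hu0),
        Complex.cpow_def_of_ne_zero hu0, Complex.cpow_def_of_ne_zero (by exact_mod_cast hpos.ne'),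
        Complex.log_ofReal_mul hpos hu0, ← Complex.exp_add, Complex.ofReal_log hpos.le]
      ring_nf
    have hP := Complex.tsum_exp_neg_quadratic (a := a e) (by rw [hare]; exact he) 0
    have ha20 : (a e) ^ (1 / 2 : ℂ) ≠ 0 := by
      rw [Complex.cpow_ne_zero_iff_of_exponent_ne_zero (by norm_num)]; exact hae
    have hS1 : (∑' m : ℤ, cexp (2 * Real.pi * I * (m : ℂ) ^ 2 / n) * cexp (-Real.pi * e * (m : ℂ) ^ 2))
        = ∑' m : ℤ, cexp (-Real.pi * a e * m ^ 2 + 2 * Real.pi * 0 * m) := by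
      refine tsum_congr fun m => ?_
      rw [← Complex.exp_add]; congr 1
      simp only [a]; ring
    have hS2 : (∑' m : ℤ, cexp (-Real.pi * I * n * (m : ℂ) ^ 2 / 2) * cexp (-Real.pi * w e * (m : ℂ) ^ 2))
        = ∑' m : ℤ, cexp (-Real.pi / a e * (m + I * 0) ^ 2) := by
      refine tsum_congr fun m => ?_
      rw [← Complex.exp_add]; congr 1
      have : (a e)⁻¹ = w e + I * n / 2 := by
        have h3 : (2 * a e) ≠ 0 := mul_ne_zero two_ne_zero hae
        simp only [w]
        field_simp
        simp only [a]
        field_simp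
        ring_nf
        simp
      rw [div_eq_mul_inv (-(Real.pi : ℂ)) (a e), this]; ring
    rw [hcp, hS1, hS2, hP]
    field_simp))
  have hroot : (-(2 * I) / n : ℂ) ^ (1 / 2 : ℂ) = (1 - I) / Real.sqrt n := by
    have hsq : ((1 - I) / (Real.sqrt n : ℂ)) ^ 2 = (-(2 * I) / n : ℂ) := by
      rw [div_pow, ← Complex.ofReal_pow, Real.sq_sqrt hnr.le]
      congr 1
      ring_nf; simp; ring
    rw [← hsq, one_div]
    apply Complex.sq_cpow_two_inv
    rw [Complex.div_ofReal_re]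
    simp
    omega
  rw [hroot] at hEq
  simp only [Finset.sum_range_succ, Finset.sum_range_zero, Int.cast_natCast] at hEq
  have hsn : (Real.sqrt n : ℂ) ≠ 0 := by
    exact_mod_cast (Real.sqrt_pos.2 hnr).ne'
  rw [mul_one, mul_div_assoc', div_eq_iff hsn] at hEq
  rw [hEq]
  simp
  ring

end GaussSign
section TauProps

lemma sum_range_eq_zmod (N : ℕ) [NeZero N] (H : ℕ → ℂ) :
    ∑ j ∈ Finset.range N, H j = ∑ x : ZMod N, H x.val := by
  refine Finset.sum_nbij' (fun j => (j : ZMod N)) (fun x => x.val) ?_ ?_ ?_ ?_ ?_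
  · intro a _; exact Finset.mem_univ _
  · intro x _; exact Finset.mem_range.2 (ZMod.val_lt x)
  · intro a ha; exact ZMod.val_cast_of_lt (Finset.mem_range.1 ha)
  · intro x _; exact ZMod.natCast_zmod_val x
  · intro a ha
    rw [ZMod.val_cast_of_lt (Finset.mem_range.1 ha)]

lemma gs_prime_sq (p : ℕ) [Fact p.Prime] (hp2 : p ≠ 2) :
    ∑ r ∈ Finset.range p, cexp (2 * Real.pi * I * (r : ℂ) ^ 2 / p) =
      gaussSum ((quadraticChar (ZMod p)).ringHomComp (Int.castRingHom ℂ)) (ZMod.stdAddChar (N := p)) := by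
  rw [sum_range_eq_zmod p (fun r => cexp (2 * Real.pi * I * (r : ℂ) ^ 2 / p))]
  have h1 : ∀ x : ZMod p, cexp (2 * Real.pi * I * (x.val : ℂ) ^ 2 / p) = ZMod.stdAddChar (x ^ 2) := by
    intro x
    have := ZMod.stdAddChar_coe (N := p) ((x.val : ℤ) ^ 2)
    push_cast at this
    rw [ZMod.natCast_zmod_val] at this
    exact this.symm
  simp only [h1]
  rw [← Finset.sum_fiberwise Finset.univ (fun x : ZMod p => x ^ 2)]
  have h2 : ∀ y : ZMod p, ∑ x : ZMod p with x ^ 2 = y, ZMod.stdAddChar (x ^ 2) =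
      ((quadraticChar (ZMod p) y : ℤ) : ℂ) * ZMod.stdAddChar y + ZMod.stdAddChar (y * 1) := by
    intro y
    have h3 : ∑ x : ZMod p with x ^ 2 = y, ZMod.stdAddChar (x ^ 2) =
        ∑ x : ZMod p with x ^ 2 = y, ZMod.stdAddChar y := by
      refine Finset.sum_congr rfl fun x hx => ?_
      rw [(Finset.mem_filter.1 hx).2]
    rw [h3, Finset.sum_const, nsmul_eq_mul]
    have h4 := quadraticChar_card_sqrts (F := ZMod p) (by rw [ZMod.ringChar_zmod_n]; exact hp2) y
    have h5 : ({x : ZMod p | x ^ 2 = y}.toFinset) = Finset.univ.filter (fun x : ZMod p => x ^ 2 = y) := by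
      ext x; simp
    rw [h5] at h4
    have h6 : ((Finset.univ.filter (fun x : ZMod p => x ^ 2 = y)).card : ℂ) =
        ((quadraticChar (ZMod p) y : ℤ) : ℂ) + 1 := by
      exact_mod_cast h4
    rw [h6]; simp; ring
  simp only [h2]
  rw [Finset.sum_add_distrib, AddChar.sum_mulShift 1 (ZMod.isPrimitive_stdAddChar p)]
  simp [gaussSum]

lemma tau_prime (p : ℕ) [Fact p.Prime] (hp2 : p ≠ 2) (k : ℕ) (hk : ¬ p ∣ k) :
    jacobiTau p k = ((jacobiSym k p : ℤ) : ℂ) *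
      ∑ r ∈ Finset.range p, cexp (2 * Real.pi * I * (r : ℂ) ^ 2 / p) := by
  rw [gs_prime_sq p hp2]
  set χ := (quadraticChar (ZMod p)).ringHomComp (Int.castRingHom ℂ) with hχdef
  have hχ : ∀ a : ℤ, ((jacobiSym a p : ℤ) : ℂ) = χ (a : ZMod p) := by
    intro a
    rw [← jacobiSym.legendreSym.to_jacobiSym]
    rfl
  have hk0 : (k : ZMod p) ≠ 0 := by rwa [Ne, ZMod.natCast_eq_zero_iff]
  have hu := gaussSum_mulShift χ (ZMod.stdAddChar (N := p)) (Units.mk0 (k : ZMod p) hk0)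
  have hτ : jacobiTau p k = gaussSum χ (AddChar.mulShift (ZMod.stdAddChar (N := p)) (k : ZMod p)) := by
    rw [jacobiTau, gaussSum, sum_range_eq_zmod p (fun j => ((jacobiSym (j : ℤ) p : ℤ) : ℂ) *
      Complex.exp (2 * Real.pi * Complex.I * j * k / p))]
    refine Finset.sum_congr rfl fun x _ => ?_
    rw [hχ]
    have := ZMod.stdAddChar_coe (N := p) ((k : ℤ) * x.val)
    push_cast at this
    rw [ZMod.natCast_zmod_val] at this
    rw [AddChar.mulShift_apply, this]
    push_cast
    rw [ZMod.natCast_zmod_val]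
    ring_nf
  simp only [Units.val_mk0] at hu
  rw [← hu, hτ, hχ]
  push_cast
  rw [← mul_assoc]
  have : χ (k : ZMod p) * χ (k : ZMod p) = 1 := by
    have h1 := hχ k
    push_cast at h1
    rw [← h1]
    have h2 := jacobiSym.sq_one (a := k) (b := p) (by
      rw [Int.gcd_natCast_natCast]
      exact ((Nat.Prime.coprime_iff_not_dvd Fact.out).2 hk).symm)
    rw [← sq]
    exact_mod_cast h2
  rw [this, one_mul]

lemma G_prime (p : ℕ) (hp : p.Prime) (hp2 : p ≠ 2) (k : ℕ) (hk : ¬ p ∣ k) :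
    jacobiG p k = ((jacobiSym k p : ℤ) : ℂ) * Real.sqrt p := by
  have : Fact p.Prime := ⟨hp⟩
  have hodd : Odd p := hp.odd_of_ne_two hp2
  have hv := gs_value p hp.ne_zero
  rw [jacobiG, tau_prime p hp2 k hk]
  set g := ∑ r ∈ Finset.range p, cexp (2 * Real.pi * I * (r : ℂ) ^ 2 / p)
  have hI : (1 - I) ≠ 0 := by
    intro h; have := congrArg Complex.re h; simp at this
  rw [jacobiSym.at_neg_one hodd]
  have h4 : p % 4 = 1 ∨ p % 4 = 3 := by
    have := Nat.odd_iff.1 hodd; omega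
  suffices h : ((1 - I) / 2 + ((ZMod.χ₄ (p : ZMod 4) : ℤ) : ℂ) * (1 + I) / 2) * g = Real.sqrt p by
    linear_combination ((jacobiSym k p : ℤ) : ℂ) * h
  have hexp : cexp (-Real.pi * I * p / 2) = if p % 4 = 1 then -I else I := by
    have hd := Nat.div_add_mod p 4
    set m := p / 4
    have : cexp (-Real.pi * I * p / 2) = cexp (-Real.pi * I * ((p % 4 : ℕ) : ℂ) / 2) := by
      rw [Complex.exp_eq_exp_iff_exists_int]
      refine ⟨-m, ?_⟩
      have hpc : (p : ℂ) = 4 * m + ((p % 4 : ℕ) : ℂ) := by exact_mod_cast hd.symm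
      rw [hpc]; push_cast; ring
    rw [this]
    have e1 : cexp (-Real.pi * I / 2) = -I := by
      rw [show (-Real.pi * I / 2 : ℂ) = -(Real.pi / 2 * I) by ring, Complex.exp_neg,
        Complex.exp_pi_div_two_mul_I]; simp
    rcases h4 with h | h
    · rw [h, Nat.cast_one, mul_one, e1]; simp
    · rw [h]
      rw [show (-Real.pi * I * ((3 : ℕ) : ℂ) / 2 : ℂ) = ((3 : ℕ) : ℂ) * (-Real.pi * I / 2) by push_cast; ring, Complex.exp_nat_mul, e1]
      simp [pow_succ]
  rw [hexp] at hv
  rcases h4 with h | h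
  · rw [ZMod.χ₄_nat_one_mod_four h]
    rw [if_pos h] at hv
    apply mul_right_cancel₀ hI
    push_cast
    linear_combination hv
  · rw [ZMod.χ₄_nat_three_mod_four h]
    rw [if_neg (by omega)] at hv
    apply mul_right_cancel₀ hI
    push_cast
    linear_combination -I * hv - (Real.sqrt p) * I_sq

lemma tau_pow_zero (p : ℕ) (hp : p.Prime) (e k : ℕ) (hk : ¬ p ^ e ∣ k) :
    jacobiTau (p ^ (e + 1)) k = 0 := by
  have hp0 : (p : ℂ) ≠ 0 := by exact_mod_cast hp.ne_zero
  have : NeZero p := ⟨hp.ne_zero⟩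
  rw [jacobiTau]
  have h1 : ∀ H : ℕ → ℂ, ∑ j ∈ Finset.range (p ^ (e + 1)), H j =
      ∑ a ∈ Finset.range p, ∑ b ∈ Finset.range (p ^ e), H (a + p * b) := by
    intro H
    rw [← Finset.sum_product']
    symm
    refine Finset.sum_nbij' (fun x => x.1 + p * x.2) (fun j => (j % p, j / p)) ?_ ?_ ?_ ?_ ?_
    · rintro ⟨a, b⟩ h
      simp only [Finset.mem_product, Finset.mem_range] at h ⊢
      rw [pow_succ']
      calc a + p * b < p + p * b := by omega
        _ = p * (b + 1) := by ring
        _ ≤ p * p ^ e := Nat.mul_le_mul_left _ h.2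
    · intro j h
      simp only [Finset.mem_product, Finset.mem_range] at h ⊢
      refine ⟨Nat.mod_lt _ hp.pos, ?_⟩
      rw [Nat.div_lt_iff_lt_mul hp.pos, ← pow_succ]; exact h
    · rintro ⟨a, b⟩ h
      simp only [Finset.mem_product, Finset.mem_range] at h ⊢
      rw [Nat.add_mul_mod_self_left, Nat.mod_eq_of_lt h.1, Nat.add_mul_div_left _ _ hp.pos,
        Nat.div_eq_of_lt h.1, zero_add]
    · intro j h
      exact Nat.mod_add_div j p
    · intro _ _; rfl
  rw [h1]
  refine Finset.sum_eq_zero fun a _ => ?_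
  set ζ := cexp (2 * Real.pi * I * k / p ^ e) with hζ
  have hterm : ∀ b ∈ Finset.range (p ^ e), ((jacobiSym ((a + p * b : ℕ) : ℤ) (p ^ (e + 1)) : ℤ) : ℂ) *
      Complex.exp (2 * Real.pi * Complex.I * ((a + p * b : ℕ) : ℂ) * k / ((p ^ (e + 1) : ℕ) : ℂ)) =
      (((jacobiSym (a : ℤ) p) ^ (e + 1) : ℤ) : ℂ) * Complex.exp (2 * Real.pi * Complex.I * a * k / (p ^ (e + 1) : ℂ)) * ζ ^ b := by
    intro b _
    rw [jacobiSym.pow_right, jacobiSym.mod_left' (a₁ := ((a + p * b : ℕ) : ℤ)) (a₂ := a) (by push_cast; simp)]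
    rw [hζ, ← Complex.exp_nat_mul, mul_assoc _ (cexp _), ← Complex.exp_add]
    congr 2
    push_cast
    field_simp
    ring
  rw [Finset.sum_congr rfl hterm, ← Finset.mul_sum]
  have hpe : (p : ℂ) ^ e ≠ 0 := pow_ne_zero _ hp0
  have hζ1 : ζ ≠ 1 := by
    intro h
    rw [hζ, Complex.exp_eq_one_iff] at h
    obtain ⟨n, hn⟩ := h
    apply hk
    have h2 : (k : ℂ) = n * p ^ e := by
      have h3 : (2 * Real.pi * I : ℂ) ≠ 0 := Complex.two_pi_I_ne_zero
      apply mul_left_cancel₀ h3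
      rw [div_eq_iff hpe] at hn
      rw [hn]; ring
    have h4 : (k : ℤ) = n * (p : ℤ) ^ e := by exact_mod_cast h2
    have h5 : ((p ^ e : ℕ) : ℤ) ∣ (k : ℤ) := ⟨n, by rw [h4]; push_cast; ring⟩
    exact_mod_cast h5
  have hζp : ζ ^ (p ^ e) = 1 := by
    rw [hζ, ← Complex.exp_nat_mul, Complex.exp_eq_one_iff]
    refine ⟨k, ?_⟩
    push_cast
    field_simp
  rw [geom_sum_eq hζ1, hζp]
  simp

lemma tau_mul (m n k : ℕ) (hm : m ≠ 0) (hn : n ≠ 0) (hmn : m.Coprime n) :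
    jacobiTau (m * n) k = ((jacobiSym m n : ℤ) : ℂ) * ((jacobiSym n m : ℤ) : ℂ) *
      (jacobiTau m k * jacobiTau n k) := by
  have : NeZero m := ⟨hm⟩
  have : NeZero n := ⟨hn⟩
  have hmc : (m : ℂ) ≠ 0 := by exact_mod_cast hm
  have hnc : (n : ℂ) ≠ 0 := by exact_mod_cast hn
  have hpos : 0 < m * n := by positivity
  set H : ℕ → ℂ := fun j => ((jacobiSym (j : ℤ) (m * n) : ℤ) : ℂ) *
    Complex.exp (2 * Real.pi * Complex.I * j * k / ((m * n : ℕ) : ℂ)) with hH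
  have hper : ∀ j, H (j % (m * n)) = H j := by
    intro j
    simp only [hH]
    congr 1
    · rw [jacobiSym.mod_left' (a₁ := ((j % (m * n) : ℕ) : ℤ)) (a₂ := j) (by push_cast; simp)]
    · rw [Complex.exp_eq_exp_iff_exists_int]
      have hd : (j : ℂ) = ((m * n : ℕ) : ℂ) * ((j / (m * n) : ℕ) : ℂ) + ((j % (m * n) : ℕ) : ℂ) := by
        exact_mod_cast (Nat.div_add_mod j (m * n)).symm
      generalize j / (m * n) = Q at hd
      refine ⟨-(Q * k : ℤ), ?_⟩
      rw [hd]
      push_cast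
      field_simp
      ring
  have hinj : Set.InjOn (fun x : ℕ × ℕ => (n * x.1 + m * x.2) % (m * n))
      (Finset.range m ×ˢ Finset.range n : Finset (ℕ × ℕ)) := by
    rintro ⟨a, b⟩ h ⟨a', b'⟩ h' heq
    simp only [Finset.coe_product, Set.mem_prod, Finset.coe_range, Set.mem_Iio] at h h'
    have heq' : n * a + m * b ≡ n * a' + m * b' [MOD m * n] := heq
    have e1 : n * a ≡ n * a' [MOD m] := by
      have := heq'.of_mul_right n
      have z : ∀ y, m * y ≡ 0 [MOD m] := fun y => (Nat.modEq_zero_iff_dvd).2 ⟨y, rfl⟩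
      exact Nat.ModEq.add_right_cancel ((z b).trans (z b').symm) this
    have e2 : m * b ≡ m * b' [MOD n] := by
      have := heq'.of_mul_left m
      have z : ∀ y, n * y ≡ 0 [MOD n] := fun y => (Nat.modEq_zero_iff_dvd).2 ⟨y, rfl⟩
      exact Nat.ModEq.add_left_cancel ((z a).trans (z a').symm) this
    have f1 := Nat.ModEq.cancel_left_of_coprime hmn e1
    have f2 := Nat.ModEq.cancel_left_of_coprime hmn.symm e2
    rw [Nat.ModEq, Nat.mod_eq_of_lt h.1, Nat.mod_eq_of_lt h'.1] at f1
    rw [Nat.ModEq, Nat.mod_eq_of_lt h.2, Nat.mod_eq_of_lt h'.2] at f2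
    rw [f1, f2]
  have hmaps : Set.MapsTo (fun x : ℕ × ℕ => (n * x.1 + m * x.2) % (m * n))
      (Finset.range m ×ˢ Finset.range n : Finset (ℕ × ℕ)) (Finset.range (m * n) : Finset ℕ) := by
    intro x _
    simpa using Nat.mod_lt _ hpos
  have hsurj := Finset.surjOn_of_injOn_of_card_le _ hmaps hinj (by simp)
  have hsum : jacobiTau (m * n) k =
      ∑ x ∈ Finset.range m ×ˢ Finset.range n, H (n * x.1 + m * x.2) := by
    rw [jacobiTau]
    symm
    refine Finset.sum_nbij (fun x : ℕ × ℕ => (n * x.1 + m * x.2) % (m * n)) ?_ hinj hsurj ?_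
    · intro x hx; exact hmaps hx
    · intro x _; exact (hper _).symm
  rw [hsum, Finset.sum_product, jacobiTau, jacobiTau, Finset.sum_mul_sum, Finset.mul_sum]
  refine Finset.sum_congr rfl fun a _ => ?_
  rw [Finset.mul_sum]
  refine Finset.sum_congr rfl fun b _ => ?_
  simp only [hH]
  have hJ : jacobiSym ((n * a + m * b : ℕ) : ℤ) (m * n) =
      jacobiSym n m * jacobiSym a m * (jacobiSym m n * jacobiSym b n) := by
    rw [jacobiSym.mul_right, jacobiSym.mod_left' (b := m) (a₁ := ((n * a + m * b : ℕ) : ℤ)) (a₂ := n * a) (by push_cast; simp),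
      jacobiSym.mod_left' (b := n) (a₁ := ((n * a + m * b : ℕ) : ℤ)) (a₂ := m * b) (by push_cast; simp), jacobiSym.mul_left,
      jacobiSym.mul_left]
  have hE : Complex.exp (2 * Real.pi * Complex.I * ((n * a + m * b : ℕ) : ℂ) * k / ((m * n : ℕ) : ℂ)) =
      Complex.exp (2 * Real.pi * Complex.I * a * k / m) * Complex.exp (2 * Real.pi * Complex.I * b * k / n) := by
    rw [← Complex.exp_add]
    congr 1
    push_cast
    field_simp
  rw [hJ, hE]
  push_cast
  ring

lemma G_mul (m n k : ℕ) (hm : Odd m) (hn : Odd n) (hmn : m.Coprime n) :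
    jacobiG (m * n) k = jacobiG m k * jacobiG n k := by
  have hm0 : m ≠ 0 := by rintro rfl; simp at hm
  have hn0 : n ≠ 0 := by rintro rfl; simp at hn
  have hsq : ((jacobiSym n m : ℤ) : ℂ) ^ 2 = 1 := by
    have := jacobiSym.sq_one (a := n) (b := m) (by rw [Int.gcd_natCast_natCast]; exact hmn.symm)
    exact_mod_cast this
  rw [jacobiG, jacobiG, jacobiG, tau_mul m n k hm0 hn0 hmn, jacobiSym.at_neg_one hm,
    jacobiSym.at_neg_one hn, jacobiSym.at_neg_one (hm.mul hn)]
  push_cast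
  rw [map_mul]
  have h4 : ∀ p, Odd p → p % 4 = 1 ∨ p % 4 = 3 := by
    intro p hp
    have := Nat.odd_iff.1 hp; omega
  rcases h4 m hm with h | h
  · rw [jacobiSym.quadratic_reciprocity_one_mod_four h hn, ZMod.χ₄_nat_one_mod_four h]
    push_cast
    linear_combination (((1 - I) / 2 + ((ZMod.χ₄ n : ℤ) : ℂ) * (1 + I) / 2) *
      jacobiTau m k * jacobiTau n k) * hsq
  · rcases h4 n hn with h' | h'
    · rw [← jacobiSym.quadratic_reciprocity_one_mod_four h' hm, ZMod.χ₄_nat_one_mod_four h']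
      push_cast at hsq ⊢
      linear_combination (((1 - I) / 2 + ((ZMod.χ₄ m : ℤ) : ℂ) * (1 + I) / 2) *
        jacobiTau m k * jacobiTau n k) * hsq
    · rw [jacobiSym.quadratic_reciprocity_three_mod_four h h', ZMod.χ₄_nat_three_mod_four h,
        ZMod.χ₄_nat_three_mod_four h']
      push_cast
      linear_combination (-jacobiTau m k * jacobiTau n k) * hsq - jacobiTau m k * jacobiTau n k * I_sq

end TauProps
section PartThree

lemma gen_summable (f : ℕ → ℂ) (h0 : f 0 = 0) (h1 : f 1 = 1)
    (hmul : ∀ {m n : ℕ}, Nat.Coprime m n → f (m * n) = f m * f n)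
    (hloc : ∀ {p : ℕ}, p.Prime → Summable (fun n : ℕ => ‖f (p ^ n)‖))
    (hb : Summable (fun p : Nat.Primes => ∑' n : ℕ, ‖f ((p : ℕ) ^ (n + 1))‖)) :
    Summable (fun n => ‖f n‖) := by
  set F : ℕ → ℝ := fun n => ‖f n‖ with hF
  have F1 : F 1 = 1 := by simp [hF, h1]
  have Fmul : ∀ {m n : ℕ}, Nat.Coprime m n → F (m * n) = F m * F n := by
    intro m n h; simp [hF, hmul h]
  have Floc : ∀ {p : ℕ}, p.Prime → Summable (fun n : ℕ => ‖F (p ^ n)‖) := by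
    intro p hp; simpa [hF] using hloc hp
  refine summable_of_sum_range_le (c := Real.exp (∑' p : Nat.Primes, ∑' n : ℕ, ‖f ((p : ℕ) ^ (n + 1))‖))
    (fun n => norm_nonneg _) ?_
  intro N
  obtain ⟨-, hs⟩ := EulerProduct.summable_and_hasSum_smoothNumbers_prod_primesBelow_tsum
    F1 Fmul Floc N
  have hs' : HasSum ((N.smoothNumbers).indicator F) (∏ p ∈ N.primesBelow, ∑' n : ℕ, F (p ^ n)) :=
    hasSum_subtype_iff_indicator.mp hs
  have e1 : ∑ i ∈ Finset.range N, F i ≤ ∏ p ∈ N.primesBelow, ∑' n : ℕ, F (p ^ n) := by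
    calc ∑ i ∈ Finset.range N, F i = ∑ i ∈ Finset.range N, (N.smoothNumbers).indicator F i := by
          refine Finset.sum_congr rfl fun i hi => ?_
          rcases Nat.eq_zero_or_pos i with rfl | hpos
          · have : F 0 = 0 := by simp [hF, h0]
            by_cases h : (0 : ℕ) ∈ N.smoothNumbers
            · rw [Set.indicator_of_mem h]
            · rw [Set.indicator_of_notMem h, this]
          · rw [Set.indicator_of_mem (Nat.mem_smoothNumbers_of_lt hpos (Finset.mem_range.mp hi))]
      _ ≤ _ := sum_le_hasSum _ (fun i _ => Set.indicator_nonneg (fun _ _ => norm_nonneg _) _) hs'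
  refine e1.trans ?_
  have e2 : ∏ p ∈ N.primesBelow, ∑' n : ℕ, F (p ^ n) =
      ∏ p ∈ N.primesBelow, (1 + ∑' n : ℕ, F (p ^ (n + 1))) := by
    refine Finset.prod_congr rfl fun p hp => ?_
    have hp' := Nat.prime_of_mem_primesBelow hp
    have : Summable (fun n : ℕ => F (p ^ n)) := hloc hp'
    rw [this.tsum_eq_zero_add]; simp [F1]
  rw [e2]
  refine (Real.prod_one_add_le_exp_sum _ (fun p => tsum_nonneg fun n => norm_nonneg _)).trans ?_
  refine Real.exp_le_exp.mpr ?_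
  have e3 : ∑ p ∈ N.primesBelow, ∑' n : ℕ, F (p ^ (n + 1)) =
      ∑ p ∈ N.primesBelow.subtype Nat.Prime, ∑' n : ℕ, F ((p : ℕ) ^ (n + 1)) := by
    rw [Finset.sum_subtype_of_mem (f := fun p : ℕ => ∑' n : ℕ, F (p ^ (n + 1)))]
    intro p hp; exact Nat.prime_of_mem_primesBelow hp
  rw [e3]
  exact Summable.sum_le_tsum (f := fun p : Nat.Primes => ∑' n : ℕ, ‖f ((p : ℕ) ^ (n + 1))‖) _
    (fun p _ => tsum_nonneg fun n => norm_nonneg _) hb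

variable {M : ℕ} [NeZero M] (χ : DirichletCharacter ℂ M)

lemma X_norm_lt (w : ℂ) (hw : 1 < w.re) (p : Nat.Primes) :
    ‖χ ((p : ℕ) : ZMod M) * ((p : ℕ) : ℂ) ^ (-w)‖ < 1 := by
  grw [norm_mul, DirichletCharacter.norm_le_one, norm_natCast_cpow_of_pos (mod_cast p.prop.pos), neg_re, one_mul]
  exact Real.rpow_lt_one_of_one_lt_of_neg (mod_cast p.prop.one_lt) (by linarith)

lemma one_add_X_ne (w : ℂ) (hw : 1 < w.re) (p : Nat.Primes) :
    1 + χ ((p : ℕ) : ZMod M) * ((p : ℕ) : ℂ) ^ (-w) ≠ 0 := by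
  intro h
  have h1 := X_norm_lt χ w hw p
  rw [show χ ((p : ℕ) : ZMod M) * ((p : ℕ) : ℂ) ^ (-w) = -1 by linear_combination h] at h1
  simp at h1

lemma one_sub_X_ne (w : ℂ) (hw : 1 < w.re) (p : Nat.Primes) :
    1 - χ ((p : ℕ) : ZMod M) * ((p : ℕ) : ℂ) ^ (-w) ≠ 0 := by
  intro h
  have h1 := X_norm_lt χ w hw p
  rw [show χ ((p : ℕ) : ZMod M) * ((p : ℕ) : ℂ) ^ (-w) = 1 by linear_combination -h] at h1
  simp at h1

lemma L_ne (w : ℂ) (hw : 1 < w.re) : χ.LFunction w ≠ 0 := by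
  rw [DirichletCharacter.LFunction_eq_LSeries χ hw]
  exact DirichletCharacter.LSeries_ne_zero_of_one_lt_re χ hw

lemma M_hasProd (w : ℂ) (hw : 1 < w.re) :
    HasProd (fun p : Nat.Primes => 1 + χ ((p : ℕ) : ZMod M) * ((p : ℕ) : ℂ) ^ (-w))
      (χ.LFunction w / (χ ^ 2).LFunction (2 * w)) := by
  have hw2 : 1 < (2 * w).re := by simp; linarith
  have h1 := DirichletCharacter.LSeries_eulerProduct_hasProd χ hw
  have h2 := DirichletCharacter.LSeries_eulerProduct_hasProd (χ ^ 2) hw2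
  rw [← DirichletCharacter.LFunction_eq_LSeries χ hw] at h1
  rw [← DirichletCharacter.LFunction_eq_LSeries (χ ^ 2) hw2] at h2
  have h3 := h1.mul (h2.inv₀ (L_ne _ _ hw2))
  rw [← div_eq_mul_inv] at h3
  convert h3 using 2 with p
  have hp : ((p : ℕ) : ℂ) ≠ 0 := by exact_mod_cast p.prop.ne_zero
  have e : (χ ^ 2) ((p : ℕ) : ZMod M) * ((p : ℕ) : ℂ) ^ (-(2 * w)) =
      (χ ((p : ℕ) : ZMod M) * ((p : ℕ) : ℂ) ^ (-w)) ^ 2 := by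
    rw [MulChar.pow_apply' _ two_ne_zero, mul_pow]
    congr 1
    rw [sq, ← Complex.cpow_add _ _ hp]; congr 1; ring
  rw [e, inv_inv]
  have := one_sub_X_ne χ w hw p
  field_simp
  ring

lemma M_ne (w : ℂ) (hw : 1 < w.re) :
    χ.LFunction w / (χ ^ 2).LFunction (2 * w) ≠ 0 := by
  have hw2 : 1 < (2 * w).re := by simp; linarith
  exact div_ne_zero (L_ne _ _ hw) (L_ne _ _ hw2)

lemma norm_one_sub_inv_le (t : ℂ) (ht : 0 < t.re) (p : ℕ) (hp : p.Prime) :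
    ‖(1 - (p : ℂ) ^ (-t))⁻¹‖ ≤ (1 - (2 : ℝ) ^ (-t.re))⁻¹ ∧ 1 - (p : ℂ) ^ (-t) ≠ 0 := by
  have h1 : ‖(p : ℂ) ^ (-t)‖ ≤ (2 : ℝ) ^ (-t.re) := by
    rw [norm_natCast_cpow_of_pos hp.pos, neg_re]
    exact Real.rpow_le_rpow_of_nonpos (by norm_num) (by exact_mod_cast hp.two_le) (by linarith)
  have h2 : (2 : ℝ) ^ (-t.re) < 1 := Real.rpow_lt_one_of_one_lt_of_neg (by norm_num) (by linarith)
  have h3 : 1 - (2 : ℝ) ^ (-t.re) ≤ ‖1 - (p : ℂ) ^ (-t)‖ := by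
    have := norm_sub_norm_le (1 : ℂ) ((p : ℂ) ^ (-t))
    rw [norm_one] at this
    linarith
  refine ⟨?_, ?_⟩
  · rw [norm_inv]; exact inv_anti₀ (by linarith) h3
  · intro h; rw [h, norm_zero] at h3; linarith

/-- local factor -/
def Afac (s t : ℂ) (p : Nat.Primes) : ℂ :=
  1 + χ ((p : ℕ) : ZMod M) * ((p : ℕ) : ℂ) ^ (-s) * (1 - ((p : ℕ) : ℂ) ^ (-t))⁻¹

lemma A_bound (s t : ℂ) (ht : 0 < t.re) (p : Nat.Primes) :
    ‖χ ((p : ℕ) : ZMod M) * ((p : ℕ) : ℂ) ^ (-s) * (1 - ((p : ℕ) : ℂ) ^ (-t))⁻¹‖ ≤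
      ((p : ℕ) : ℝ) ^ (-s.re) * (1 - (2 : ℝ) ^ (-t.re))⁻¹ := by
  rw [norm_mul, norm_mul, norm_natCast_cpow_of_pos p.prop.pos, neg_re]
  refine mul_le_mul ?_ (norm_one_sub_inv_le t ht p p.prop).1 (norm_nonneg _) (by positivity)
  exact mul_le_of_le_one_left (by positivity) (DirichletCharacter.norm_le_one χ _)

lemma A_bound_summable (s t : ℂ) (hs : 1 < s.re) :
    Summable (fun p : Nat.Primes => ((p : ℕ) : ℝ) ^ (-s.re) * (1 - (2 : ℝ) ^ (-t.re))⁻¹) :=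
  (Nat.Primes.summable_rpow.mpr (by linarith)).mul_right _

lemma A_multipliable (s t : ℂ) (hs : 1 < s.re) (ht : 0 < t.re) : Multipliable (Afac χ s t) := by
  unfold Afac
  refine multipliable_one_add_of_summable ?_
  exact (A_bound_summable s t hs).of_nonneg_of_le (fun p => norm_nonneg _) (A_bound χ s t ht)

lemma E_one (s t : ℂ) (hs : 1 < s.re) (ht : 0 < t.re) :
    Erec (fun m => χ (m : ZMod M)) s t 1 = (∏' p, Afac χ s t p) *
      (χ.LFunction s / (χ ^ 2).LFunction (2 * s))⁻¹ *
      (χ.LFunction (s + t) / (χ ^ 2).LFunction (2 * (s + t)))⁻¹ := by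
  have hst : 1 < (s + t).re := by simp; linarith
  have h := ((A_multipliable χ s t hs ht).hasProd.mul
    ((M_hasProd χ s hs).inv₀ (M_ne χ s hs))).mul
    ((M_hasProd χ (s + t) hst).inv₀ (M_ne χ _ hst))
  rw [← h.tprod_eq]
  rw [Erec]
  refine tprod_congr fun p => ?_
  have h1 := one_add_X_ne χ s hs p
  have h2 := one_add_X_ne χ (s + t) hst p
  have h3 := (norm_one_sub_inv_le t ht p p.prop).2
  have hp : ((p : ℕ) : ℂ) ≠ 0 := by exact_mod_cast p.prop.ne_zero
  have hP : ((p : ℕ) : ℂ) ^ s ≠ 0 := by simp [Complex.cpow_eq_zero_iff, hp]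
  have hQ : ((p : ℕ) : ℂ) ^ t ≠ 0 := by simp [Complex.cpow_eq_zero_iff, hp]
  unfold Afac
  rw [Complex.cpow_neg] at h1 h2 h3 ⊢
  rw [Complex.cpow_neg _ t, Complex.cpow_neg _ (s + t)]
  rw [Complex.cpow_add _ _ hp] at h2 ⊢
  generalize ((p : ℕ) : ℂ) ^ s = P at *
  generalize ((p : ℕ) : ℂ) ^ t = Q at *
  generalize χ ((p : ℕ) : ZMod M) = c at *
  have h1' : P + c ≠ 0 := by
    intro h; apply h1; field_simp; simpa using h
  have h2' : P * Q + c ≠ 0 := by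
    intro h; apply h2; field_simp; simpa using h
  have h3' : Q - 1 ≠ 0 := by
    intro h; apply h3; field_simp; simpa using h
  have e1 : (1 + c * P⁻¹)⁻¹ = P / (P + c) := by field_simp
  have e2 : (1 + c * (P * Q)⁻¹)⁻¹ = P * Q / (P * Q + c) := by field_simp
  have e3 : (1 - Q⁻¹)⁻¹ = Q / (Q - 1) := by field_simp
  rw [e1, e2, e3]
  field_simp
  ring

lemma E_ind (s t : ℂ) (hs : 1 < s.re) (ht : 0 < t.re) (N : ℕ) :
    (∏ j ∈ Finset.range (N + 2), χ.LFunction (s + (j : ℂ) * t) /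
      (χ ^ 2).LFunction (2 * s + 2 * (j : ℂ) * t)) * Erec (fun m => χ (m : ZMod M)) s t (N + 1)
      = ∏' p, Afac χ s t p := by
  have hj : ∀ j : ℕ, 1 < (s + (j : ℂ) * t).re := by
    intro j
    have : (s + (j : ℂ) * t).re = s.re + j * t.re := by simp
    rw [this]; have : 0 ≤ (j : ℝ) * t.re := by positivity
    linarith
  have e : ∀ j : ℕ, 2 * s + 2 * (j : ℂ) * t = 2 * (s + (j : ℂ) * t) := by intro j; ring
  simp_rw [e]
  induction N with
  | zero =>
    rw [zero_add, E_one χ s t hs ht]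
    have h0 := M_ne χ _ (hj 0)
    have h1 := M_ne χ _ (hj 1)
    rw [Finset.prod_range_succ, Finset.prod_range_one]
    simp only [Nat.cast_zero, zero_mul, add_zero, Nat.cast_one, one_mul] at *
    generalize χ.LFunction s / (χ ^ 2).LFunction (2 * s) = x at *
    generalize χ.LFunction (s + t) / (χ ^ 2).LFunction (2 * (s + t)) = y at *
    field_simp
  | succ N ih =>
    have h0 := M_ne χ _ (hj (N + 2))
    have hE : Erec (fun m => χ (m : ZMod M)) s t (N + 1 + 1) =
        Erec (fun m => χ (m : ZMod M)) s t (N + 1) * (χ.LFunction (s + ((N + 2 : ℕ) : ℂ) * t) /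
          (χ ^ 2).LFunction (2 * (s + ((N + 2 : ℕ) : ℂ) * t)))⁻¹ := by
      rw [← ((M_hasProd χ _ (hj (N + 2))).inv₀ h0).tprod_eq, Erec]
      push_cast
      rfl
    rw [hE, Finset.prod_range_succ, ← ih]
    rw [mul_mul_mul_comm, mul_inv_cancel₀ h0, mul_one]

end PartThree
section PartFour

/-- the summand -/
def fm {q : ℕ} (ψ : DirichletCharacter ℂ q) (k : ℕ) (s t : ℂ) (n : ℕ) : ℂ :=
  if Odd n then jacobiG n k * ψ (n : ZMod q) * aF t n * (n : ℂ) ^ (-(s + 1 / 2)) else 0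

variable {q : ℕ} (ψ : DirichletCharacter ℂ q) (k : ℕ) (s t : ℂ)

lemma fm_zero : fm ψ k s t 0 = 0 := by simp [fm]

lemma fm_one : fm ψ k s t 1 = 1 := by
  simp [fm, jacobiG, jacobiTau, aF]
  ring

lemma fm_mul {m n : ℕ} (h : m.Coprime n) :
    fm ψ k s t (m * n) = fm ψ k s t m * fm ψ k s t n := by
  unfold fm
  by_cases hm : Odd m
  · by_cases hn : Odd n
    · rw [if_pos (Nat.odd_mul.mpr ⟨hm, hn⟩), if_pos hm, if_pos hn, G_mul m n k hm hn h]
      have e : aF t (m * n) = aF t m * aF t n := by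
        unfold aF
        rw [Nat.Coprime.primeFactors_mul h, Finset.prod_union h.disjoint_primeFactors]
      rw [e, Nat.cast_mul, map_mul, Nat.cast_mul, Complex.natCast_mul_natCast_cpow]
      ring
    · rw [if_neg (fun h => hn (Nat.odd_mul.mp h).2), if_neg hn, mul_zero]
  · rw [if_neg (fun h => hm (Nat.odd_mul.mp h).1), if_neg hm, zero_mul]

lemma fm_two (j : ℕ) : fm ψ k s t (2 ^ (j + 1)) = 0 := by
  unfold fm
  rw [if_neg]
  rw [Nat.not_odd_iff_even]
  exact ⟨2 ^ j, by ring⟩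

lemma fm_pow_zero (p : ℕ) (hp : p.Prime) (e : ℕ) (h : ¬ p ^ e ∣ k) :
    fm ψ k s t (p ^ (e + 1)) = 0 := by
  unfold fm jacobiG
  rw [tau_pow_zero p hp e k h]
  simp

lemma not_pow_dvd (hk : 1 ≤ k) (p : ℕ) (hp : p.Prime) (j : ℕ) (hj : k ≤ j) : ¬ p ^ j ∣ k := by
  intro h
  have h1 := Nat.le_of_dvd hk h
  have h2 : j < p ^ j := Nat.lt_pow_self hp.one_lt
  omega

lemma fm_pow_far (hk : 1 ≤ k) (p : ℕ) (hp : p.Prime) (n : ℕ) (hn : n ∉ Finset.range (k + 1)) :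
    fm ψ k s t (p ^ n) = 0 := by
  rw [Finset.mem_range] at hn
  obtain ⟨e, rfl⟩ : ∃ e, n = e + 1 := ⟨n - 1, by omega⟩
  exact fm_pow_zero ψ k s t p hp e (not_pow_dvd k hk p hp e (by omega))

lemma fm_loc (hk : 1 ≤ k) (p : ℕ) (hp : p.Prime) : Summable (fun n : ℕ => ‖fm ψ k s t (p ^ n)‖) :=
  summable_of_ne_finset_zero (s := Finset.range (k + 1)) fun n hn => by
    rw [fm_pow_far ψ k s t hk p hp n hn, norm_zero]

variable {M : ℕ} [NeZero M] (χ : DirichletCharacter ℂ M)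
  (hχ1 : ∀ m : ℕ, Odd m → χ (m : ZMod M) = ((jacobiSym (k : ℤ) m : ℤ) : ℂ) * ψ (m : ZMod q))
  (hχ2 : ∀ m : ℕ, Even m → χ (m : ZMod M) = 0)

lemma aF_prime (p : ℕ) (hp : p.Prime) : aF t p = (1 - (p : ℂ) ^ (-t))⁻¹ := by
  simp [aF, hp.primeFactors]

lemma fm_prime (hχ1 : ∀ m : ℕ, Odd m → χ (m : ZMod M) =
      ((jacobiSym (k : ℤ) m : ℤ) : ℂ) * ψ (m : ZMod q))
    (p : ℕ) (hp : p.Prime) (hp2 : p ≠ 2) (h : ¬ p ∣ k) :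
    fm ψ k s t p = χ (p : ZMod M) * (p : ℂ) ^ (-s) * (1 - (p : ℂ) ^ (-t))⁻¹ := by
  have hodd : Odd p := hp.odd_of_ne_two hp2
  have hp0 : (p : ℂ) ≠ 0 := by exact_mod_cast hp.ne_zero
  unfold fm
  rw [if_pos hodd, G_prime p hp hp2 k h, hχ1 p hodd, aF_prime t p hp]
  have e : (p : ℂ) ^ (-s) = ((Real.sqrt p : ℝ) : ℂ) * (p : ℂ) ^ (-(s + 1 / 2)) := by
    have : ((Real.sqrt p : ℝ) : ℂ) = (p : ℂ) ^ (1 / 2 : ℂ) := by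
      rw [Real.sqrt_eq_rpow, Complex.ofReal_cpow (by positivity)]
      push_cast; rfl
    rw [this, ← Complex.cpow_add _ _ hp0]
    congr 1; ring
  rw [e]; ring

lemma fm_summable (hk : 1 ≤ k) (hs : 1 < s.re) (ht : 0 < t.re)
    (hχ1 : ∀ m : ℕ, Odd m → χ (m : ZMod M) =
      ((jacobiSym (k : ℤ) m : ℤ) : ℂ) * ψ (m : ZMod q)) :
    Summable (fun n => ‖fm ψ k s t n‖) := by
  refine gen_summable _ (fm_zero ψ k s t) (fm_one ψ k s t) (fun h => fm_mul ψ k s t h)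
    (fun hp => fm_loc ψ k s t hk _ hp) ?_
  refine Summable.of_norm_bounded_eventually (A_bound_summable s t hs) ?_
  have hfin : Set.Finite {p : Nat.Primes | (p : ℕ) ∈ (2 * k).primeFactors} :=
    ((2 * k).primeFactors.finite_toSet).preimage Subtype.val_injective.injOn
  filter_upwards [hfin.compl_mem_cofinite] with p hp
  have hp' : ¬ (p : ℕ) ∣ 2 * k := by
    intro h
    exact hp (Nat.mem_primeFactors.mpr ⟨p.prop, h, by omega⟩)
  have hp2 : (p : ℕ) ≠ 2 := fun h => hp' (h ▸ dvd_mul_right 2 k)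
  have hpk : ¬ (p : ℕ) ∣ k := fun h => hp' (h.mul_left 2)
  rw [tsum_eq_single 0]
  · rw [zero_add, pow_one, norm_norm, fm_prime ψ k s t χ hχ1 p p.prop hp2 hpk]
    exact A_bound χ s t ht p
  · intro n hn
    rw [fm_pow_zero ψ k s t p p.prop n, norm_zero]
    exact fun h => hpk ((dvd_pow_self _ hn).trans h)

/-- the factor at primes dividing `k` -/
def Bfac (p : ℕ) : ℂ :=
  1 + aF t p * ∑' j : ℕ, if 1 ≤ j then
      jacobiG (p ^ j) k * ψ ((p ^ j : ℕ) : ZMod q) * ((p : ℂ)) ^ (-(j : ℂ) * (s + 1 / 2)) else 0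

lemma fm_local_bad (hk : 1 ≤ k) (p : ℕ) (hp : p.Prime) (hp2 : p ≠ 2) :
    ∑' n : ℕ, fm ψ k s t (p ^ n) = Bfac ψ k s t p := by
  have hodd : Odd p := hp.odd_of_ne_two hp2
  rw [(fm_loc ψ k s t hk p hp).of_norm.tsum_eq_zero_add, pow_zero, fm_one, Bfac]
  congr 1
  rw [Summable.tsum_eq_zero_add (f := fun j : ℕ => if 1 ≤ j then
      jacobiG (p ^ j) k * ψ ((p ^ j : ℕ) : ZMod q) * ((p : ℂ)) ^ (-(j : ℂ) * (s + 1 / 2)) else 0)]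
  · rw [if_neg (by norm_num), zero_add, ← tsum_mul_left]
    refine tsum_congr fun j => ?_
    rw [if_pos (by omega), fm, if_pos hodd.pow]
    have e : aF t (p ^ (j + 1)) = aF t p := by
      unfold aF; rw [Nat.primeFactors_pow _ (by omega)]
    have e2 : ((p ^ (j + 1) : ℕ) : ℂ) ^ (-(s + 1 / 2)) =
        (p : ℂ) ^ (-((j + 1 : ℕ) : ℂ) * (s + 1 / 2)) := by
      rw [Nat.cast_pow, ← Complex.natCast_cpow_natCast_mul]
      congr 1; ring
    rw [e, e2]; ring
  · refine summable_of_ne_finset_zero (s := Finset.range (k + 1)) fun n hn => ?_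
    rw [Finset.mem_range] at hn
    obtain ⟨e, rfl⟩ : ∃ e, n = e + 1 := ⟨n - 1, by omega⟩
    unfold jacobiG
    rw [tau_pow_zero p hp e k (not_pow_dvd k hk p hp e (by omega))]
    simp

lemma fm_local (hk : 1 ≤ k) (hχ1 : ∀ m : ℕ, Odd m → χ (m : ZMod M) =
      ((jacobiSym (k : ℤ) m : ℤ) : ℂ) * ψ (m : ZMod q))
    (hχ2 : ∀ m : ℕ, Even m → χ (m : ZMod M) = 0) (p : Nat.Primes) :
    ∑' n : ℕ, fm ψ k s t ((p : ℕ) ^ n) = Afac χ s t p *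
      (if (p : ℕ) ∈ k.primeFactors.filter (fun p => p ≠ 2) then Bfac ψ k s t p else 1) := by
  by_cases hp2 : (p : ℕ) = 2
  · rw [if_neg (by simp [hp2]), mul_one, Afac, hχ2 p (by rw [hp2]; exact even_two), hp2]
    rw [tsum_eq_single 0]
    · simp [fm_one]
    · intro n hn
      obtain ⟨e, rfl⟩ : ∃ e, n = e + 1 := ⟨n - 1, by omega⟩
      exact fm_two ψ k s t e
  · have hodd : Odd (p : ℕ) := p.prop.odd_of_ne_two hp2
    by_cases hpk : (p : ℕ) ∣ k
    · rw [if_pos (by simp [hp2, p.prop, hpk]; omega), fm_local_bad ψ k s t hk p p.prop hp2, Afac,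
        hχ1 p hodd]
      have : jacobiSym (k : ℤ) p = 0 := by
        rw [jacobiSym.eq_zero_iff]
        refine ⟨p.prop.ne_zero, ?_⟩
        rw [Int.gcd_natCast_natCast, Nat.gcd_eq_right hpk]
        exact p.prop.one_lt.ne'
      rw [this]; simp
    · rw [if_neg (by simp [hpk]), mul_one, Afac,
        (fm_loc ψ k s t hk p p.prop).of_norm.tsum_eq_zero_add, pow_zero, fm_one,
        tsum_eq_single 0, zero_add, pow_one, fm_prime ψ k s t χ hχ1 p p.prop hp2 hpk]
      intro n hn
      exact fm_pow_zero ψ k s t p p.prop n (fun h => hpk ((dvd_pow_self _ hn).trans h))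

lemma fm_tsum (hk : 1 ≤ k) (hs : 1 < s.re) (ht : 0 < t.re)
    (hχ1 : ∀ m : ℕ, Odd m → χ (m : ZMod M) =
      ((jacobiSym (k : ℤ) m : ℤ) : ℂ) * ψ (m : ZMod q))
    (hχ2 : ∀ m : ℕ, Even m → χ (m : ZMod M) = 0) :
    ∑' n, fm ψ k s t n = (∏' p, Afac χ s t p) * Pkt s t k (fun m => ψ (m : ZMod q)) := by
  have h := EulerProduct.eulerProduct_hasProd (f := fm ψ k s t) (fm_one ψ k s t)
    (fun h => fm_mul ψ k s t h) (fm_summable ψ k s t χ hk hs ht hχ1) (fm_zero ψ k s t)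
  simp_rw [fm_local ψ k s t χ hk hχ1 hχ2] at h
  set S := k.primeFactors.filter (fun p => p ≠ 2) with hS
  have hB : HasProd (fun p : Nat.Primes => if (p : ℕ) ∈ S then Bfac ψ k s t p else 1)
      (∏ p ∈ S.subtype Nat.Prime, if (p : ℕ) ∈ S then Bfac ψ k s t p else 1) := by
    refine hasProd_prod_of_ne_finset_one fun p hp => ?_
    rw [if_neg]
    intro h'; exact hp (Finset.mem_subtype.mpr h')
  rw [h.unique ((A_multipliable χ s t hs ht).hasProd.mul hB)]
  congr 1
  rw [Finset.prod_subtype_of_mem (fun p : ℕ => if p ∈ S then Bfac ψ k s t p else 1)]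
  · unfold Pkt
    refine Finset.prod_congr rfl fun p hp => ?_
    rw [if_pos hp]; rfl
  · intro p hp
    exact Nat.prime_of_mem_primeFactors (Finset.mem_of_mem_filter _ hp)

end PartFour

/-- Euler-product factorization of `Σ_{n odd} G((·/n),k) ψ(n) a_t(n) n^{-(s+1/2)}`.
Here `ψ` is a character mod `q ∈ {4,8}` and `χ` is the character mod `8kq` given on odd `m` by
`(k|m)·ψ(m)` (the character `(4k/·)ψ`). -/
theorem statement17
    (q : ℕ) (hq : q = 4 ∨ q = 8) (ψ : DirichletCharacter ℂ q)
    (k : ℕ) (hk : 1 ≤ k) (N : ℕ) (hN : 1 ≤ N)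
    (s t : ℂ) (hs : 1 < s.re) (ht : 0 < t.re)
    (χ : DirichletCharacter ℂ (8 * k * q))
    (hχ : (∀ m : ℕ, Odd m →
        χ (m : ZMod (8 * k * q)) = ((jacobiSym (k : ℤ) m : ℤ) : ℂ) * ψ (m : ZMod q)) ∧
      (∀ m : ℕ, Even m → χ (m : ZMod (8 * k * q)) = 0)) :
    haveI : NeZero (8 * k * q) := ⟨by rcases hq with rfl | rfl <;> omega⟩
    Summable (fun n : ℕ => ‖(if Odd n then
        jacobiG n k * ψ (n : ZMod q) * aF t n * (n : ℂ) ^ (-(s + 1 / 2)) else 0)‖) ∧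
    (∑' n : ℕ, if Odd n then
        jacobiG n k * ψ (n : ZMod q) * aF t n * (n : ℂ) ^ (-(s + 1 / 2)) else 0) =
      (∏ j ∈ Finset.range (N + 1),
        χ.LFunction (s + (j : ℂ) * t) / (χ ^ 2).LFunction (2 * s + 2 * (j : ℂ) * t)) *
      Erec (fun m => χ (m : ZMod (8 * k * q))) s t N *
      Pkt s t k (fun m => ψ (m : ZMod q)) := by
  haveI : NeZero (8 * k * q) := ⟨by rcases hq with rfl | rfl <;> omega⟩
  refine ⟨fm_summable ψ k s t χ hk hs ht hχ.1, ?_⟩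
  obtain ⟨N, rfl⟩ : ∃ n, N = n + 1 := ⟨N - 1, by omega⟩
  rw [E_ind χ s t hs ht N]
  exact fm_tsum ψ k s t χ hk hs ht hχ.1 hχ.2
end
end

section
/- Let ψ be a Dirichlet character modulo 4 or 8 (so that ψ(2) = 0), and let δ > 0 and ε > 0. Then there is a constant C > 0 such that for every integer k ≥ 1 and all s, t ∈ ℂ with Re s > 1/2 + δ and Re t > δ: |P(s,t,k;ψ)| ≤ C·k^{ε}, where P(s,t,k;ψ) := ∏_{p | k, p odd prime} (1 + a_t(p)·Σ_{j ≥ 1} G((·/p^j),k)·ψ(p^j)·p^{−j(s+1/2)}), the inner sums having only finitely many nonzero terms since G((·/p^j),k) = 0 for j ≥ v_p(k)+2. -/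
open Complex

noncomputable section

lemma jac_norm_le (a : ℤ) (n : ℕ) : ‖((jacobiSym a n : ℤ) : ℂ)‖ ≤ 1 := by
  have h := (jacobiSym.trichotomy a n)
  rcases h with h | h | h <;> rw [h] <;> simp

lemma tau_norm_le (n k : ℕ) : ‖jacobiTau n k‖ ≤ n := by
  unfold jacobiTau
  refine (norm_sum_le_of_le _ (f := _) (n := fun _ => (1:ℝ)) ?_).trans (by simp)
  intro j _
  rw [norm_mul]
  have h2 : ‖Complex.exp (2 * Real.pi * Complex.I * j * k / n)‖ = 1 := by
    have : (2 * Real.pi * Complex.I * j * k / n : ℂ) = ((2 * Real.pi * j * k / n : ℝ) : ℂ) * I := by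
      push_cast; ring
    rw [this, Complex.norm_exp_ofReal_mul_I]
  rw [h2, mul_one]
  exact jac_norm_le _ _

lemma G_norm_le (n k : ℕ) : ‖jacobiG n k‖ ≤ 2 * n := by
  unfold jacobiG
  rw [norm_mul]
  refine mul_le_mul ?_ (tau_norm_le n k) (norm_nonneg _) (by norm_num)
  have h1 : ‖(1 - Complex.I) / 2‖ ≤ 1 := by
    rw [norm_div]
    have := norm_sub_le (1:ℂ) I
    simp at this ⊢
    linarith
  have h2 : ‖(1 + Complex.I) / 2‖ ≤ 1 := by
    rw [norm_div]
    have := norm_add_le (1:ℂ) I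
    simp at this ⊢
    linarith
  refine (norm_add_le _ _).trans ?_
  rw [mul_div_assoc, norm_mul]
  have := mul_le_mul (jac_norm_le (-1) n) h2 (norm_nonneg _) zero_le_one
  linarith

lemma factor_le (q : ℕ) (ψ : DirichletCharacter ℂ q) (δ : ℝ) (hδ : 0 < δ) (k p : ℕ)
    (hp : p.Prime) (s t : ℂ) (hs : 1 / 2 + δ < s.re) (ht : δ < t.re) :
    ‖(1 + aF t p * ∑' j : ℕ, if 1 ≤ j then
      jacobiG (p ^ j) k * ψ ((p ^ j : ℕ) : ZMod q) * ((p : ℂ)) ^ (-(j : ℂ) * (s + 1 / 2)) else 0)‖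
      ≤ 1 + (1 - (2:ℝ) ^ (-δ))⁻¹ * (2 * (1 - (2:ℝ) ^ (-δ))⁻¹) := by
  have hr1 : (2:ℝ) ^ (-δ) < 1 := Real.rpow_lt_one_of_one_lt_of_neg (by norm_num) (by linarith)
  have hr0 : 0 < (2:ℝ) ^ (-δ) := by positivity
  have hp2 : (2:ℝ) ≤ p := by exact_mod_cast hp.two_le
  have hp0 : (0:ℝ) < p := by linarith
  refine (norm_add_le _ _).trans ?_
  rw [norm_one, norm_mul]
  refine add_le_add le_rfl (mul_le_mul ?_ ?_ (norm_nonneg _) (inv_nonneg.2 (by linarith)))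
  · unfold aF
    rw [hp.primeFactors, Finset.prod_singleton, norm_inv]
    refine inv_anti₀ (by linarith) ?_
    have h1 := norm_sub_norm_le (1:ℂ) ((p:ℂ) ^ (-t))
    have h2 : ‖(p:ℂ) ^ (-t)‖ ≤ (2:ℝ) ^ (-δ) := by
      rw [Complex.norm_natCast_cpow_of_pos hp.pos]
      calc (p:ℝ) ^ (-t).re ≤ (p:ℝ) ^ (-δ) :=
            Real.rpow_le_rpow_of_exponent_le (by linarith) (by simp; linarith)
        _ ≤ _ := Real.rpow_le_rpow_of_nonpos (by norm_num) hp2 (by linarith)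
    rw [norm_one] at h1
    linarith
  · have hg := (hasSum_geometric_of_lt_one hr0.le hr1).mul_left 2
    refine tsum_of_norm_bounded hg ?_
    intro j
    split_ifs with hj
    · rw [norm_mul, norm_mul, Complex.norm_natCast_cpow_of_pos hp.pos]
      have e1 : ‖jacobiG (p ^ j) k‖ * ‖ψ ((p ^ j : ℕ) : ZMod q)‖ ≤ (2 * (p:ℝ) ^ (j:ℝ)) * 1 := by
        refine mul_le_mul ?_ (DirichletCharacter.norm_le_one ψ _) (norm_nonneg _) (by positivity)
        have := G_norm_le (p ^ j) k
        rw [Real.rpow_natCast]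
        exact_mod_cast this
      have hj' : (0:ℝ) ≤ j := by positivity
      have e2 : (p:ℝ) ^ (-(j : ℂ) * (s + 1 / 2)).re ≤ (p:ℝ) ^ (-(j:ℝ) * (1 + δ)) := by
        refine Real.rpow_le_rpow_of_exponent_le (by linarith) ?_
        have : (-(j : ℂ) * (s + 1 / 2)).re = -(j:ℝ) * (s.re + 1/2) := by
          simp
        rw [this]
        nlinarith
      calc _ ≤ (2 * (p:ℝ) ^ (j:ℝ)) * 1 * (p:ℝ) ^ (-(j:ℝ) * (1 + δ)) :=
            mul_le_mul e1 e2 (by positivity) (by positivity)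
        _ = 2 * (p:ℝ) ^ (-δ * j) := by
            rw [mul_one, mul_assoc, ← Real.rpow_add hp0]
            congr 2; ring
        _ ≤ 2 * (2:ℝ) ^ (-δ * j) := by
            have := Real.rpow_le_rpow_of_nonpos (z := -δ * j) (by norm_num) hp2 (by nlinarith)
            linarith
        _ = _ := by rw [Real.rpow_mul (by norm_num), Real.rpow_natCast]
    · rw [norm_zero]; positivity

/-- the bound `|P(s,t,k;ψ)| ≤ C k^ε` for `Re s > 1/2 + δ`, `Re t > δ`,
uniformly in `k`, where `ψ` is a Dirichlet character mod `4` or mod `8`. -/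
theorem statement18
    (q : ℕ) (hq : q = 4 ∨ q = 8) (ψ : DirichletCharacter ℂ q)
    (δ ε : ℝ) (hδ : 0 < δ) (hε : 0 < ε) :
    ∃ C : ℝ, 0 < C ∧ ∀ k : ℕ, 1 ≤ k → ∀ s t : ℂ, 1 / 2 + δ < s.re → δ < t.re →
      ‖Pkt s t k (fun m => ψ (m : ZMod q))‖ ≤ C * (k : ℝ) ^ ε := by
  have hr1 : (2:ℝ) ^ (-δ) < 1 := Real.rpow_lt_one_of_one_lt_of_neg (by norm_num) (by linarith)
  have hr2 : 0 < (1 - (2:ℝ) ^ (-δ))⁻¹ := inv_pos.2 (by linarith)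
  set A : ℝ := 1 + (1 - (2:ℝ) ^ (-δ))⁻¹ * (2 * (1 - (2:ℝ) ^ (-δ))⁻¹) with hA
  have hA1 : 1 ≤ A := by
    have : 0 < (1 - (2:ℝ) ^ (-δ))⁻¹ * (2 * (1 - (2:ℝ) ^ (-δ))⁻¹) := by positivity
    linarith
  obtain ⟨N, hN⟩ : ∃ N : ℕ, ∀ p : ℕ, N ≤ p → A ≤ (p:ℝ) ^ ε := by
    have := ((tendsto_rpow_atTop hε).comp tendsto_natCast_atTop_atTop).eventually_ge_atTop A
    exact Filter.eventually_atTop.1 this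
  refine ⟨A ^ N, by positivity, ?_⟩
  intro k hk s t hs ht
  set S := k.primeFactors.filter (fun p => p ≠ 2) with hS
  have hSp : ∀ p ∈ S, p.Prime := fun p hp =>
    Nat.prime_of_mem_primeFactors (Finset.mem_filter.1 hp).1
  have h1 : ‖Pkt s t k (fun m => ψ (m : ZMod q))‖ ≤ ∏ p ∈ S, ((if p < N then A else 1) * (p:ℝ) ^ ε) := by
    unfold Pkt
    rw [norm_prod]
    refine Finset.prod_le_prod (fun _ _ => norm_nonneg _) ?_
    intro p hp
    refine (factor_le q ψ δ hδ k p (hSp p hp) s t hs ht).trans ?_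
    rw [← hA]
    split_ifs with h
    · have : 1 ≤ (p:ℝ) ^ ε := Real.one_le_rpow (by exact_mod_cast (hSp p hp).one_le) hε.le
      nlinarith
    · rw [one_mul]; exact hN p (not_lt.1 h)
  refine h1.trans ?_
  rw [Finset.prod_mul_distrib]
  refine mul_le_mul ?_ ?_ (Finset.prod_nonneg fun _ _ => by positivity) (by positivity)
  · rw [← Finset.prod_filter, Finset.prod_const]
    refine pow_le_pow_right₀ hA1 ?_
    have : S.filter (fun p => p < N) ⊆ Finset.range N := by
      intro p hp
      exact Finset.mem_range.2 (Finset.mem_filter.1 hp).2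
    simpa using Finset.card_le_card this
  · rw [Real.finsetProd_rpow _ _ (fun _ _ => by positivity)]
    refine Real.rpow_le_rpow (Finset.prod_nonneg fun _ _ => by positivity) ?_ hε.le
    have h3 : ∏ p ∈ S, p ∣ k :=
      (Finset.prod_dvd_prod_of_subset _ _ _ (Finset.filter_subset _ _)).trans
        (Nat.prod_primeFactors_dvd k)
    have h4 : ((∏ p ∈ S, p : ℕ) : ℝ) ≤ k := Nat.cast_le.2 (Nat.le_of_dvd hk h3)
    rw [Nat.cast_prod] at h4
    exact h4
end
end

section
/- Let k be an odd positive integer and let s ∈ ℂ with 1/2 < Re s < 1. Then ∏_{p | k} ( 1 + (1 − p^{s−1})^{−1} · Σ_{j ≥ 1} G((·/p^j), k²) · p^{−j(s+1/2)} ) = ∏_{p | k} ( 1 + (p−1)/((p^s−p)·(1−p^{2s−1})) + p^{−α_p(s−1/2)} · ( 1/(p^s·(1−p^{s−1})) + (p−1)/((p−p^s)·(1−p^{2s−1})) ) ), where for each prime p | k, α_p := 2·v_p(k), and each inner sum over j has only finitely many nonzero terms since G((·/p^j),k²) = 0 for j ≥ α_p + 2. -/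
open Complex

noncomputable section

lemma s19_theta_lim {ι : Type*} {l : Filter ι} (x : ℝ) (τ : ι → ℂ)
    (h : Filter.Tendsto (fun i => (τ i).im) l Filter.atTop) :
    Filter.Tendsto (fun i => jacobiTheta₂ x (τ i)) l (nhds 1) := by
  have key : Filter.Tendsto (fun i => ∑' n : ℤ, jacobiTheta₂_term n x (τ i)) l
      (nhds (∑' n : ℤ, if n = 0 then (1:ℂ) else 0)) := by
    have hs : Summable (fun n : ℤ => ‖jacobiTheta₂_term n (0:ℂ) I‖) :=
      ((summable_jacobiTheta₂_term_iff 0 I).mpr (by simp)).norm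
    refine tendsto_tsum_of_dominated_convergence hs ?_ ?_
    · intro n
      by_cases hn : n = 0
      · subst hn
        simpa [jacobiTheta₂_term] using tendsto_const_nhds
      · simp only [hn, if_false]
        rw [tendsto_zero_iff_norm_tendsto_zero]
        simp only [norm_jacobiTheta₂_term, ofReal_im, mul_zero, sub_zero]
        apply Real.tendsto_exp_atBot.comp
        refine Filter.Tendsto.const_mul_atTop_of_neg ?_ h
        have : (0:ℝ) < (n:ℝ)^2 := by positivity
        nlinarith [Real.pi_pos]
    · filter_upwards [h.eventually_ge_atTop 1] with i hi n
      simp only [norm_jacobiTheta₂_term, ofReal_im, zero_im, mul_zero, sub_zero, I_im, mul_one]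
      apply Real.exp_le_exp.mpr
      have : (0:ℝ) ≤ Real.pi * (n:ℝ)^2 := by positivity
      nlinarith
  simpa [jacobiTheta₂] using key

lemma s19_theta_split (b : ℕ) [NeZero b] (c w : ℂ) (hw : 0 < w.im) (hc : c.im = 0)
    (hper : ∀ m r : ℤ, cexp (Real.pi * I * ((r + m * b : ℤ) : ℂ) ^ 2 * c)
      = cexp (Real.pi * I * (r:ℂ) ^ 2 * c)) :
    jacobiTheta₂ 0 (c + w) = 1 / (-I * (b ^ 2 * w)) ^ (1 / 2 : ℂ) *
      ∑ r : Fin b, cexp (Real.pi * I * (r : ℂ) ^ 2 * c) *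
        jacobiTheta₂ (((r : ℝ) / (b : ℝ) : ℝ) : ℂ) (-1 / (b ^ 2 * w)) := by
  have hb : (b : ℂ) ≠ 0 := by exact_mod_cast NeZero.ne b
  have hw0 : w ≠ 0 := by rintro rfl; simp at hw
  have hsum : Summable (fun n : ℤ => jacobiTheta₂_term n 0 (c + w)) :=
    (summable_jacobiTheta₂_term_iff 0 _).mpr (by simp [hc, hw])
  have h1 : jacobiTheta₂ 0 (c + w) = ∑ r : Fin b, ∑' m : ℤ,
      jacobiTheta₂_term ((r : ℤ) + m * b) 0 (c + w) := by
    rw [jacobiTheta₂, ← (Int.divModEquiv b).symm.tsum_eq]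
    rw [← (Equiv.prodComm _ _).tsum_eq, Summable.tsum_prod, tsum_fintype]
    · simp [Int.divModEquiv, add_comm]
    · exact (hsum.comp_injective (Int.divModEquiv b).symm.injective).comp_injective
        (Equiv.prodComm _ _).injective
  rw [h1, Finset.mul_sum]
  refine Finset.sum_congr rfl fun r _ => ?_
  have h2 : ∀ m : ℤ, jacobiTheta₂_term ((r : ℤ) + m * b) 0 (c + w) =
      cexp (Real.pi * I * (r : ℂ) ^ 2 * c) * cexp (Real.pi * I * (r : ℂ) ^ 2 * w) *
        jacobiTheta₂_term m (b * r * w) (b ^ 2 * w) := by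
    intro m
    have := hper m r
    rw [jacobiTheta₂_term, jacobiTheta₂_term]
    simp only [Int.cast_natCast] at this
    rw [← this, ← Complex.exp_add, ← Complex.exp_add]
    congr 1
    push_cast
    ring
  simp_rw [h2]
  rw [tsum_mul_left]
  change _ * jacobiTheta₂ _ _ = _
  rw [jacobiTheta₂_functional_equation (b * r * w)]
  have h3 : (b * r * w : ℂ) / (b ^ 2 * w) = (((r : ℝ) / (b : ℝ) : ℝ) : ℂ) := by
    push_cast
    field_simp
  have h4 : -Real.pi * I * (b * r * w : ℂ) ^ 2 / (b ^ 2 * w) = -(Real.pi * I * (r : ℂ) ^ 2 * w) := by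
    field_simp
  rw [h3, h4, Complex.exp_neg]
  have := Complex.exp_ne_zero (Real.pi * I * (r : ℂ) ^ 2 * w)
  field_simp

lemma s19_mul_cpow (x : ℝ) (hx : 0 < x) (y r : ℂ) (hy : y ≠ 0) :
    ((x : ℂ) * y) ^ r = (x : ℂ) ^ r * y ^ r := by
  have hx' : (x : ℂ) ≠ 0 := by exact_mod_cast hx.ne'
  rw [cpow_def_of_ne_zero (mul_ne_zero hx' hy), cpow_def_of_ne_zero hx', cpow_def_of_ne_zero hy,
    log_ofReal_mul hx hy, ← Complex.exp_add, ofReal_log hx.le]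
  congr 1; ring

lemma s19_cancel {E P Y T S R : ℂ} (hE : E ≠ 0)
    (h : 1 / (E * P) * S = 1 / T * (1 / (E * Y) * R)) :
    1 / P * S = 1 / T * (1 / Y * R) := by
  have := congrArg (fun z => E * z) h
  simp only [one_div, mul_inv] at this ⊢
  rw [← mul_assoc, ← mul_assoc, mul_inv_cancel₀ hE, one_mul] at this
  rw [this]
  field_simp

lemma s19_landsberg (p : ℕ) [NeZero p] :
    ∑ r : Fin p, cexp (Real.pi * I * (r : ℂ) ^ 2 * (2 / p)) =
      1 / (-I * (2 / p)) ^ (1 / 2 : ℂ) * ∑ r : Fin 2, cexp (Real.pi * I * (r : ℂ) ^ 2 * (-p / 2)) := by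
  have hp : (p : ℂ) ≠ 0 := by exact_mod_cast NeZero.ne p
  have hpr : (0:ℝ) < p := by exact_mod_cast NeZero.pos p
  let l := nhdsWithin (0:ℝ) (Set.Ioi 0)
  let y : ℝ → ℂ := fun ε => p ^ 2 / (1 + I * ε * p / 2)
  have hid : ∀ ε : ℝ, 0 < ε →
      1 / ((p : ℂ) ^ 2) ^ (1 / 2 : ℂ) * ∑ r : Fin p, cexp (Real.pi * I * (r : ℂ) ^ 2 * (2 / p)) *
        jacobiTheta₂ (((r : ℝ) / (p : ℝ) : ℝ) : ℂ) (-1 / (p ^ 2 * (I * ε))) =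
      1 / (-I * (2 / p + I * ε)) ^ (1 / 2 : ℂ) * (1 / (y ε) ^ (1 / 2 : ℂ) *
        ∑ r : Fin 2, cexp (Real.pi * I * (r : ℂ) ^ 2 * (-p / 2)) *
        jacobiTheta₂ (((r : ℝ) / ((2 : ℕ) : ℝ) : ℝ) : ℂ) (-1 / ((2 : ℕ) ^ 2 * (I * ε * y ε / 4)))) := by
    intro ε hε
    have hεc : (ε : ℂ) ≠ 0 := by exact_mod_cast hε.ne'
    have hden : (1 + I * ε * p / 2 : ℂ) ≠ 0 := by
      intro h
      have := congrArg Complex.re h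
      simp at this
    have hy : y ε ≠ 0 := div_ne_zero (pow_ne_zero _ hp) hden
    have hτ0 : (2 / p + I * ε : ℂ) ≠ 0 := by
      intro h
      have := congrArg Complex.im h
      simp [Complex.div_im] at this
      exact hε.ne' this
    have e1 := s19_theta_split p (2 / p) (I * ε) (by simpa using hε) (by simp [Complex.div_im]) (by
      intro m r
      rw [Complex.exp_eq_exp_iff_exists_int]
      refine ⟨2 * r * m + m ^ 2 * p, ?_⟩
      push_cast
      field_simp
      ring)
    have e4 : -1 / (2 / p + I * ε : ℂ) = -p / 2 + I * ε * y ε / 4 := by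
      have hτ1 : (2 + I * ε * p : ℂ) ≠ 0 := by
        intro h; apply hden; linear_combination h / 2
      have : (2 / p + I * ε : ℂ) = (2 + I * ε * p) / p := by field_simp
      rw [this]
      simp only [y]
      have h5 : (1 + I * ε * p / 2 : ℂ) = (2 + I * ε * p) / 2 := by ring
      rw [h5]
      field_simp
      ring
    have hwim : 0 < (I * ε * y ε / 4).im := by
      have h6 : I * ε * y ε / 4 = -1 / (2 / p + I * ε : ℂ) + p / 2 := by rw [e4]; ring
      rw [h6, neg_div, one_div]
      have h7 : (2 / p + I * ε : ℂ).im = ε := by simp [Complex.div_im]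
      have h8 : 0 < normSq (2 / p + I * ε : ℂ) := normSq_pos.mpr hτ0
      have h9 : ((p : ℂ) / 2).im = 0 := by simp [Complex.div_im]
      rw [add_im, neg_im, inv_im, h7, h9]
      have := div_pos hε h8
      rw [neg_div]; linarith
    have e2 := s19_theta_split 2 (-p / 2) (I * ε * y ε / 4) hwim (by simp [Complex.div_im]) (by
      intro m r
      rw [Complex.exp_eq_exp_iff_exists_int]
      refine ⟨- p * (r * m + m ^ 2), ?_⟩
      push_cast
      field_simp
      ring)
    have e3 := jacobiTheta₂_functional_equation 0 (2 / p + I * ε)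
    have hE : (ε : ℂ) ^ (1 / 2 : ℂ) ≠ 0 := by
      rw [Ne, cpow_eq_zero_iff]; tauto
    have f1 : -I * (p ^ 2 * (I * ε)) = (ε : ℂ) * (p : ℂ) ^ 2 := by
      linear_combination (-(ε : ℂ) * p ^ 2) * I_sq
    have f2 : -I * (((2 : ℕ) : ℂ) ^ 2 * (I * ε * y ε / 4)) = (ε : ℂ) * y ε := by
      push_cast
      linear_combination (-(ε : ℂ) * y ε) * I_sq
    rw [e4] at e3
    simp only [zero_div, ne_eq, OfNat.ofNat_ne_zero, not_false_eq_true, zero_pow, mul_zero,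
      Complex.exp_zero, mul_one] at e3
    rw [e1, e2, f1, f2, s19_mul_cpow ε hε _ _ (pow_ne_zero _ hp), s19_mul_cpow ε hε _ _ hy] at e3
    exact s19_cancel hE e3
  have hy0 : Filter.Tendsto y l (nhds ((p : ℂ) ^ 2)) := by
    have : ContinuousAt y 0 := by
      apply ContinuousAt.div
      · fun_prop
      · fun_prop
      · simp
    have h2 := this.tendsto.mono_left (nhdsWithin_le_nhds (s := Set.Ioi 0))
    simpa [y] using h2
  have hτ : Filter.Tendsto (fun ε : ℝ => (-I * (2 / p + I * ε) : ℂ)) l (nhds (-I * (2 / p))) := by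
    have : ContinuousAt (fun ε : ℝ => (-I * (2 / p + I * ε) : ℂ)) 0 := by fun_prop
    have h2 := this.tendsto.mono_left (nhdsWithin_le_nhds (s := Set.Ioi 0))
    simpa using h2
  have hP : ((p : ℂ) ^ 2) ^ (1 / 2 : ℂ) ≠ 0 := by
    rw [Ne, cpow_eq_zero_iff]; simp [hp]
  have hTne : (-I * (2 / p : ℂ)) ^ (1 / 2 : ℂ) ≠ 0 := by
    rw [Ne, cpow_eq_zero_iff]; simp [hp]
  have hinf : Filter.Tendsto (fun ε : ℝ => 1 / ((p:ℝ) ^ 2 * ε)) l Filter.atTop := by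
    have := (tendsto_inv_nhdsGT_zero (𝕜 := ℝ)).const_mul_atTop (inv_pos.mpr (pow_pos hpr 2))
    refine this.congr fun ε => ?_
    rw [one_div, mul_inv]
  have hL : Filter.Tendsto (fun ε : ℝ =>
      1 / ((p : ℂ) ^ 2) ^ (1 / 2 : ℂ) * ∑ r : Fin p, cexp (Real.pi * I * (r : ℂ) ^ 2 * (2 / p)) *
        jacobiTheta₂ (((r : ℝ) / (p : ℝ) : ℝ) : ℂ) (-1 / (p ^ 2 * (I * ε)))) l
      (nhds (1 / ((p : ℂ) ^ 2) ^ (1 / 2 : ℂ) *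
        ∑ r : Fin p, cexp (Real.pi * I * (r : ℂ) ^ 2 * (2 / p)) * 1)) := by
    refine Filter.Tendsto.const_mul _ (tendsto_finsetSum _ fun r _ => Filter.Tendsto.const_mul _ ?_)
    apply s19_theta_lim
    refine hinf.congr' ?_
    filter_upwards [self_mem_nhdsWithin] with ε hε
    have hε' : (ε : ℂ) ≠ 0 := by exact_mod_cast (ne_of_gt hε)
    have : (-1 / (p ^ 2 * (I * ε)) : ℂ) = ((1 / ((p:ℝ) ^ 2 * ε) : ℝ) : ℂ) * I := by
      push_cast
      field_simp
      rw [I_sq]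
    rw [this]; simp only [mul_I_im, ofReal_re]
  have hR : Filter.Tendsto (fun ε : ℝ =>
      1 / (-I * (2 / p + I * ε)) ^ (1 / 2 : ℂ) * (1 / (y ε) ^ (1 / 2 : ℂ) *
        ∑ r : Fin 2, cexp (Real.pi * I * (r : ℂ) ^ 2 * (-p / 2)) *
        jacobiTheta₂ (((r : ℝ) / ((2 : ℕ) : ℝ) : ℝ) : ℂ) (-1 / ((2 : ℕ) ^ 2 * (I * ε * y ε / 4))))) l
      (nhds (1 / (-I * (2 / p)) ^ (1 / 2 : ℂ) * (1 / ((p : ℂ) ^ 2) ^ (1 / 2 : ℂ) *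
        ∑ r : Fin 2, cexp (Real.pi * I * (r : ℂ) ^ 2 * (-p / 2)) * 1))) := by
    refine Filter.Tendsto.mul ?_ (Filter.Tendsto.mul ?_ ?_)
    · refine Filter.Tendsto.div tendsto_const_nhds (hτ.cpow tendsto_const_nhds ?_) hTne
      right
      have : (-I * (2 / p) : ℂ) = ((2 / p : ℝ) : ℂ) * (-I) := by push_cast; ring
      rw [this, im_ofReal_mul]
      simp [hpr.ne']
    · refine Filter.Tendsto.div tendsto_const_nhds (hy0.cpow tendsto_const_nhds ?_) hP
      left
      have : ((p : ℂ) ^ 2).re = (p : ℝ) ^ 2 := by norm_cast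
      rw [this]; positivity
    · refine tendsto_finsetSum _ fun r _ => Filter.Tendsto.const_mul _ ?_
      apply s19_theta_lim
      refine hinf.congr' ?_
      filter_upwards [self_mem_nhdsWithin] with ε hε
      have hε' : (ε : ℂ) ≠ 0 := by exact_mod_cast (ne_of_gt hε)
      have hden : (2 + I * ε * p : ℂ) ≠ 0 := by
        intro h
        have := congrArg Complex.re h
        simp at this
      have h5 : (1 + I * ε * p / 2 : ℂ) = (2 + I * ε * p) / 2 := by ring
      have : (-1 / (((2:ℕ):ℂ) ^ 2 * (I * ε * y ε / 4)) : ℂ) =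
          ((1 / ((p:ℝ) ^ 2 * ε) : ℝ) : ℂ) * I + ((-(1 / (2 * p)) : ℝ) : ℂ) := by
        simp only [y, h5]
        push_cast
        field_simp
        linear_combination (-8 : ℂ) * I_sq
      rw [this]; simp only [add_im, mul_I_im, ofReal_re, ofReal_im, add_zero]
  have hLR := tendsto_nhds_unique (hL.congr' (by
    filter_upwards [self_mem_nhdsWithin] with ε hε using hid ε hε)) hR
  simp only [mul_one] at hLR
  have := congrArg (fun z => ((p : ℂ) ^ 2) ^ (1 / 2 : ℂ) * z) hLR
  rw [← mul_assoc, mul_one_div_cancel hP, one_mul] at this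
  rw [this, mul_left_comm, ← mul_assoc (((p : ℂ) ^ 2) ^ (1 / 2 : ℂ)), mul_one_div_cancel hP, one_mul]

lemma s19_negI : (-I) ^ (1 / 2 : ℂ) * (Real.sqrt 2 : ℂ) = 1 - I := by
  rw [cpow_def_of_ne_zero (by simp), log_neg_I]
  have : -(Real.pi / 2 : ℂ) * I * (1 / 2) = ((-(Real.pi / 4) : ℝ) : ℂ) * I := by push_cast; ring
  rw [this, exp_mul_I, ← ofReal_cos, ← ofReal_sin, Real.cos_neg, Real.sin_neg, Real.cos_pi_div_four,
    Real.sin_pi_div_four]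
  have h2 : (Real.sqrt 2 : ℂ) * Real.sqrt 2 = 2 := by
    norm_cast; simp
  push_cast
  linear_combination (1 - I) / 2 * h2

lemma s19_pow_half (x : ℝ) (hx : 0 ≤ x) : (x : ℂ) ^ (1 / 2 : ℂ) = (Real.sqrt x : ℂ) := by
  rw [Real.sqrt_eq_rpow, ofReal_cpow hx]; simp

lemma s19_T (p : ℕ) [NeZero p] :
    1 / (-I * (2 / p)) ^ (1 / 2 : ℂ) * (1 - I) = (Real.sqrt p : ℂ) := by
  have hpr : (0:ℝ) < p := by exact_mod_cast NeZero.pos p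
  have h1 : (-I * (2 / p) : ℂ) = ((2 / p : ℝ) : ℂ) * (-I) := by push_cast; ring
  rw [h1, s19_mul_cpow _ (by positivity) _ _ (by simp), ← s19_negI, s19_pow_half _ (by positivity),
    Real.sqrt_div (by norm_num)]
  have h3 : (-I) ^ (1 / 2 : ℂ) ≠ 0 := by rw [Ne, cpow_eq_zero_iff]; simp
  have h4 : (Real.sqrt p : ℂ) ≠ 0 := by
    rw [Ne, ofReal_eq_zero]; positivity
  have h5 : (Real.sqrt 2 : ℂ) ≠ 0 := by
    rw [Ne, ofReal_eq_zero]; positivity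
  push_cast
  field_simp

lemma s19_quad1 (p : ℕ) [NeZero p] (hp : p % 4 = 1) :
    ∑ r : Fin p, cexp (Real.pi * I * (r : ℂ) ^ 2 * (2 / p)) = (Real.sqrt p : ℂ) := by
  rw [s19_landsberg, ← s19_T p]
  congr 1
  rw [Fin.sum_univ_two]
  have : cexp (Real.pi * I * (((1 : Fin 2) : ℕ) : ℂ) ^ 2 * (-p / 2)) = -I := by
    obtain ⟨q, rfl⟩ : ∃ q, p = 4 * q + 1 := ⟨p / 4, by omega⟩
    rw [← exp_neg_pi_div_two_mul_I, Complex.exp_eq_exp_iff_exists_int]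
    refine ⟨-q, ?_⟩
    push_cast
    simp
    ring
  rw [this]; simp; ring

lemma s19_quad3 (p : ℕ) [NeZero p] (hp : p % 4 = 3) :
    ∑ r : Fin p, cexp (Real.pi * I * (r : ℂ) ^ 2 * (2 / p)) = I * (Real.sqrt p : ℂ) := by
  rw [s19_landsberg, ← s19_T p, mul_left_comm]
  congr 1
  rw [Fin.sum_univ_two]
  have : cexp (Real.pi * I * (((1 : Fin 2) : ℕ) : ℂ) ^ 2 * (-p / 2)) = I := by
    obtain ⟨q, rfl⟩ : ∃ q, p = 4 * q + 3 := ⟨p / 4, by omega⟩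
    rw [← exp_pi_div_two_mul_I, Complex.exp_eq_exp_iff_exists_int]
    refine ⟨-q-1, ?_⟩
    push_cast
    simp
    ring
  rw [this]; simp
  linear_combination I_sq

lemma s19_sum_range (n : ℕ) [NeZero n] (F : ZMod n → ℂ) :
    ∑ x ∈ Finset.range n, F (x : ZMod n) = ∑ z : ZMod n, F z := by
  obtain ⟨m, rfl⟩ : ∃ m, n = m + 1 := ⟨n - 1, by have := NeZero.pos n; omega⟩
  rw [Finset.sum_range]
  refine Finset.sum_congr rfl fun x _ => ?_
  congr 1
  exact Fin.cast_val_eq_self x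

lemma s19_std (n : ℕ) [NeZero n] (x : ℕ) :
    ZMod.stdAddChar (x : ZMod n) = cexp (2 * Real.pi * I * x / n) := by
  have := ZMod.stdAddChar_coe (N := n) (x : ℤ)
  simpa using this

lemma s19_gauss (p : ℕ) [Fact p.Prime] (hp : p ≠ 2) :
    ∑ z : ZMod p, ((quadraticChar (ZMod p) z : ℤ) : ℂ) * ZMod.stdAddChar z =
    ∑ r : Fin p, cexp (Real.pi * I * (r : ℂ) ^ 2 * (2 / p)) := by
  have h1 : ∑ r : Fin p, cexp (Real.pi * I * (r : ℂ) ^ 2 * (2 / p)) =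
      ∑ z : ZMod p, ZMod.stdAddChar (z ^ 2) := by
    rw [← s19_sum_range p (fun z => ZMod.stdAddChar (z ^ 2)), Finset.sum_range]
    refine Finset.sum_congr rfl fun r _ => ?_
    have h0 : (((r : ℕ) : ZMod p)) ^ 2 = (((r : ℕ) ^ 2 : ℕ) : ZMod p) := by push_cast; rfl
    rw [h0, s19_std]
    congr 1
    push_cast
    ring
  have h2 : ∑ z : ZMod p, (ZMod.stdAddChar (z ^ 2) : ℂ) =
      ∑ a : ZMod p, (((quadraticChar (ZMod p) a : ℤ) : ℂ) + 1) * ZMod.stdAddChar a := by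
    rw [← Finset.sum_fiberwise_of_maps_to (s := Finset.univ) (t := Finset.univ)
      (g := fun z : ZMod p => z ^ 2) (fun _ _ => Finset.mem_univ _)]
    refine Finset.sum_congr rfl fun a _ => ?_
    have h3 := quadraticChar_card_sqrts (F := ZMod p) (by rwa [ZMod.ringChar_zmod_n]) a
    have h4 : (((quadraticChar (ZMod p) a : ℤ) : ℂ) + 1) =
        ((Finset.univ.filter fun z : ZMod p => z ^ 2 = a).card : ℂ) := by
      have : (Finset.univ.filter fun z : ZMod p => z ^ 2 = a) = {x : ZMod p | x ^ 2 = a}.toFinset := by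
        ext; simp
      rw [this]
      exact_mod_cast h3.symm
    rw [h4, ← nsmul_eq_mul]
    apply Finset.sum_eq_card_nsmul
    intro z hz
    rw [(Finset.mem_filter.mp hz).2]
  rw [h1, h2]
  simp only [add_mul, one_mul, Finset.sum_add_distrib]
  have h5 := AddChar.sum_mulShift (R := ZMod p) (1 : ZMod p) (ZMod.isPrimitive_stdAddChar p)
  simp only [mul_one, one_ne_zero, if_false] at h5
  rw [h5]; simp

lemma s19_sum_exp (n K : ℕ) [NeZero n] :
    ∑ y ∈ Finset.range n, cexp (2 * Real.pi * I * y * K / n) = if n ∣ K then (n : ℂ) else 0 := by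
  have h5 := AddChar.sum_mulShift (R := ZMod n) (K : ZMod n) (ZMod.isPrimitive_stdAddChar n)
  rw [← s19_sum_range n (fun z => ZMod.stdAddChar (z * (K : ZMod n)))] at h5
  simp only [ZMod.natCast_eq_zero_iff, ZMod.card] at h5
  push_cast at h5
  rw [← h5]
  refine Finset.sum_congr rfl fun r _ => ?_
  rw [← Nat.cast_mul, s19_std]
  congr 1
  push_cast
  ring

lemma s19_tau (p : ℕ) [Fact p.Prime] (m K : ℕ) :
    jacobiTau (p ^ (m + 1)) K = if p ^ m ∣ K then (p : ℂ) ^ m * ∑ z : ZMod p,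
      ((quadraticChar (ZMod p) z : ℤ) : ℂ) ^ (m + 1) * ZMod.stdAddChar (z * ((K / p ^ m : ℕ) : ZMod p))
      else 0 := by
  have hp0 : (p : ℂ) ≠ 0 := by exact_mod_cast (Fact.out : p.Prime).ne_zero
  have hs : ∀ x y : ℕ, jacobiSym ((x + p * y : ℕ) : ℤ) (p ^ (m + 1)) =
      (quadraticChar (ZMod p) (x : ZMod p)) ^ (m + 1) := by
    intro x y
    rw [jacobiSym.pow_right, ← jacobiSym.legendreSym.to_jacobiSym, legendreSym]
    simp
  have h1 : jacobiTau (p ^ (m + 1)) K = (∑ x ∈ Finset.range p,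
      ((quadraticChar (ZMod p) (x : ZMod p) : ℤ) : ℂ) ^ (m + 1) *
        cexp (2 * Real.pi * I * x * K / (p ^ (m + 1) : ℕ))) *
      ∑ y ∈ Finset.range (p ^ m), cexp (2 * Real.pi * I * y * K / (p ^ m : ℕ)) := by
    rw [jacobiTau, Finset.sum_mul_sum, pow_succ, Finset.sum_range, ← finProdFinEquiv.sum_comp,
      Fintype.sum_prod_type, Finset.sum_comm, Finset.sum_range]
    refine Finset.sum_congr rfl fun x _ => ?_
    rw [Finset.sum_range]
    refine Finset.sum_congr rfl fun y _ => ?_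
    have := hs x y
    rw [pow_succ] at this
    simp only [finProdFinEquiv_apply_val]
    rw [this, mul_assoc (_ ^ (m + 1)), ← Complex.exp_add]
    push_cast
    congr 2
    field_simp
  rw [h1, s19_sum_exp]
  split_ifs with h
  · rw [mul_comm]
    push_cast
    congr 1
    rw [← s19_sum_range p (fun z => ((quadraticChar (ZMod p) z : ℤ) : ℂ) ^ (m + 1) *
      ZMod.stdAddChar (z * ((K / p ^ m : ℕ) : ZMod p)))]
    refine Finset.sum_congr rfl fun x _ => ?_
    rw [← Nat.cast_mul, s19_std]
    obtain ⟨L, rfl⟩ := h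
    rw [Nat.mul_div_cancel_left _ (pow_pos (Fact.out : p.Prime).pos m)]
    congr 2
    push_cast
    field_simp
    ring
  · simp

lemma s19_G (p : ℕ) [Fact p.Prime] (hp : p ≠ 2) (v u : ℕ) (hu : ¬ p ∣ u) (m : ℕ) :
    jacobiG (p ^ (m + 1)) ((p ^ v * u) ^ 2) =
      if m + 1 ≤ 2 * v then (if Even m then 0 else (p : ℂ) ^ m * (p - 1))
      else if m = 2 * v then (p : ℂ) ^ m * (Real.sqrt p : ℂ) else 0 := by
  have hpp : p.Prime := Fact.out
  have hodd : p % 2 = 1 := hpp.eq_two_or_odd.resolve_left hp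
  have hchar : ringChar (ZMod p) ≠ 2 := by rwa [ZMod.ringChar_zmod_n]
  have hK : (p ^ v * u) ^ 2 = p ^ (2 * v) * u ^ 2 := by ring
  have hneg : jacobiSym (-1) (p ^ (m + 1)) = (quadraticChar (ZMod p) (-1)) ^ (m + 1) := by
    rw [jacobiSym.pow_right, ← jacobiSym.legendreSym.to_jacobiSym, legendreSym]
    simp
  have hu2 : ¬ p ∣ u ^ 2 := fun h => hu (hpp.dvd_of_dvd_pow h)
  rw [jacobiG, s19_tau, hneg, hK]
  split_ifs with h1 h2 h3 h4 h5 h6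
  · -- m odd/even
    have hz : ((p ^ (2 * v) * u ^ 2 / p ^ m : ℕ) : ZMod p) = 0 := by
      rw [ZMod.natCast_eq_zero_iff]
      apply Nat.dvd_div_of_mul_dvd
      rw [← pow_succ]
      exact (pow_dvd_pow p h2).mul_right _
    rw [hz]
    have : ∀ z : ZMod p, ((quadraticChar (ZMod p) z : ℤ) : ℂ) ^ (m + 1) =
        ((quadraticChar (ZMod p) z : ℤ) : ℂ) := by
      intro z
      by_cases h0 : z = 0
      · subst h0; simp
      · have := quadraticChar_sq_one h0
        obtain ⟨q, hq⟩ := h3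
        have h8 : m + 1 = 2 * q + 1 := by omega
        rw [h8, pow_succ, pow_mul]
        have h9 : ((quadraticChar (ZMod p) z : ℤ) : ℂ) ^ 2 = 1 := by exact_mod_cast this
        rw [h9]; simp
    simp only [this, mul_zero, AddChar.map_zero_eq_one, mul_one]
    have h9 := quadraticChar_sum_zero hchar
    have h10 : ∑ z : ZMod p, ((quadraticChar (ZMod p) z : ℤ) : ℂ) = 0 := by exact_mod_cast h9
    rw [h10]; simp
  · have hz : ((p ^ (2 * v) * u ^ 2 / p ^ m : ℕ) : ZMod p) = 0 := by
      rw [ZMod.natCast_eq_zero_iff]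
      apply Nat.dvd_div_of_mul_dvd
      rw [← pow_succ]
      exact (pow_dvd_pow p h2).mul_right _
    rw [hz]
    have hq : ∃ q, m + 1 = 2 * q := by
      rw [Nat.not_even_iff_odd] at h3
      obtain ⟨q, hq⟩ := h3
      exact ⟨q + 1, by omega⟩
    obtain ⟨q, hq⟩ := hq
    have hq0 : q ≠ 0 := by omega
    have hsq : ∀ z : ZMod p, z ≠ 0 → ((quadraticChar (ZMod p) z : ℤ) : ℂ) ^ 2 = 1 := by
      intro z h0
      exact_mod_cast quadraticChar_sq_one h0
    have : ∀ z : ZMod p, ((quadraticChar (ZMod p) z : ℤ) : ℂ) ^ (m + 1) =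
        1 - if z = 0 then 1 else 0 := by
      intro z
      by_cases h0 : z = 0
      · subst h0; simp
      · rw [hq, pow_mul, hsq z h0]; simp [h0]
    simp only [this, mul_zero, AddChar.map_zero_eq_one, mul_one]
    have h10 : (((quadraticChar (ZMod p) (-1) ^ (m + 1) : ℤ)) : ℂ) = 1 := by
      push_cast
      rw [hq, pow_mul, hsq (-1) (by simp)]; simp
    rw [h10]
    simp [ZMod.card]
    ring
  · subst h4
    rw [Nat.mul_div_cancel_left _ (pow_pos hpp.pos _)]
    have hu0 : (u : ZMod p) ≠ 0 := by rwa [Ne, ZMod.natCast_eq_zero_iff]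
    have hsq : ∀ z : ZMod p, ((quadraticChar (ZMod p) z : ℤ) : ℂ) ^ (2 * v + 1) =
        ((quadraticChar (ZMod p) z : ℤ) : ℂ) := by
      intro z
      by_cases h0 : z = 0
      · subst h0; simp
      · have := quadraticChar_sq_one h0
        rw [pow_succ, pow_mul]
        have h9 : ((quadraticChar (ZMod p) z : ℤ) : ℂ) ^ 2 = 1 := by exact_mod_cast this
        rw [h9]; simp
    have hsum : ∑ z : ZMod p, ((quadraticChar (ZMod p) z : ℤ) : ℂ) ^ (2 * v + 1) *
        (ZMod.stdAddChar (z * ((u ^ 2 : ℕ) : ZMod p)) : ℂ) =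
        ∑ z : ZMod p, ((quadraticChar (ZMod p) z : ℤ) : ℂ) * ZMod.stdAddChar z := by
      rw [← Equiv.sum_comp (Equiv.mulRight₀ ((u : ZMod p) ^ 2) (pow_ne_zero 2 hu0))
        (fun z => ((quadraticChar (ZMod p) z : ℤ) : ℂ) * (ZMod.stdAddChar z : ℂ))]
      refine Finset.sum_congr rfl fun z _ => ?_
      rw [hsq]
      simp only [Equiv.mulRight₀_apply, map_mul, map_pow, quadraticChar_sq_one hu0, mul_one,
        Nat.cast_pow]
    rw [hsum, s19_gauss p hp]
    push_cast
    rw [hsq, quadraticChar_neg_one hchar, ZMod.card]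
    have h4 : p % 4 = 1 ∨ p % 4 = 3 := by omega
    rcases h4 with h4 | h4
    · rw [s19_quad1 p h4, ZMod.χ₄_nat_one_mod_four h4]
      push_cast; ring
    · rw [s19_quad3 p h4, ZMod.χ₄_nat_three_mod_four h4]
      push_cast
      linear_combination (-(p : ℂ) ^ (2 * v) * (Real.sqrt p : ℂ)) * I_sq
  · exfalso
    have hm : p ^ (2 * v + 1) ∣ p ^ (2 * v) * u ^ 2 :=
      (pow_dvd_pow p (by omega)).trans h1
    rw [pow_succ] at hm
    exact hu2 (Nat.dvd_of_mul_dvd_mul_left (pow_pos hpp.pos _) hm)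
  · simp
  · exact absurd ((pow_dvd_pow p (by omega)).mul_right _) h1
  · exact absurd ((pow_dvd_pow p (by omega)).mul_right _) h1
  · simp

lemma s19_sum (p : ℂ) (v : ℕ) (c U : ℂ) (hp : p ≠ 0) (F : ℕ → ℂ) (hc : p ^ 2 * c ^ 2 = U)
    (h0 : F 0 = 0)
    (hF : ∀ m, m + 1 ≤ 2 * v → F (m + 1) = (if Even m then 0 else p ^ m * (p - 1)) * c ^ (m + 1)) :
    ∀ w, w ≤ v → (∑ j ∈ Finset.range (2 * w + 1), F j) * (1 - U) = (1 - 1 / p) * U * (1 - U ^ w) := by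
  intro w
  induction w with
  | zero => simp [h0]
  | succ w ih =>
    intro hw
    have ih := ih (by omega)
    rw [show 2 * (w + 1) + 1 = (2 * w + 1) + 1 + 1 by ring, Finset.sum_range_succ,
      Finset.sum_range_succ, hF (2 * w) (by omega), hF (2 * w + 1) (by omega), if_pos (by simp),
      if_neg (by simp), add_mul, add_mul, ih]
    have h1 : p ^ (2 * w + 1) * (p - 1) * c ^ (2 * w + 1 + 1) = (1 - 1 / p) * U ^ (w + 1) := by
      rw [← hc, ← mul_pow, ← pow_mul, mul_pow]
      field_simp
      ring
    rw [h1]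
    ring

lemma s19_alg (p X S Q : ℂ) (hp : p ≠ 0) (hX : X ≠ 0) (h1 : X ≠ p) (h2 : X ^ 2 ≠ p)
    (hS : S * (1 - p / X ^ 2) = (1 - 1 / p) * (p / X ^ 2) * (1 - Q)) :
    1 + (1 - X / p)⁻¹ * (S + Q / X) =
    1 + (p - 1) / ((X - p) * (1 - X ^ 2 / p)) + Q * (1 / (X * (1 - X / p)) +
      (p - 1) / ((p - X) * (1 - X ^ 2 / p))) := by
  have a1 : p - X ≠ 0 := sub_ne_zero.mpr h1.symm
  have a2 : X ^ 2 - p ≠ 0 := sub_ne_zero.mpr h2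
  have hS' : S = (p - 1) * (1 - Q) / (X ^ 2 - p) := by
    rw [eq_div_iff a2]
    field_simp at hS
    linear_combination hS
  have e1 : 1 - X / p = (p - X) / p := by field_simp
  have e2 : 1 - X ^ 2 / p = -(X ^ 2 - p) / p := by field_simp; ring
  have e3 : X - p = -(p - X) := by ring
  rw [hS', e1, e2, e3]
  field_simp
  ring

theorem s19_local (k p : ℕ) (hk : Odd k) (hpk : p ∈ k.primeFactors)
    (s : ℂ) (hs1 : 1 / 2 < s.re) (hs2 : s.re < 1) :
      (1 + (1 - (p : ℂ) ^ (s - 1))⁻¹ *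
        ∑' j : ℕ, if 1 ≤ j then jacobiG (p ^ j) (k ^ 2) * (p : ℂ) ^ (-(j : ℂ) * (s + 1 / 2))
          else 0) =
      (1 + ((p : ℂ) - 1) / (((p : ℂ) ^ s - (p : ℂ)) * (1 - (p : ℂ) ^ (2 * s - 1))) +
        (p : ℂ) ^ (-((2 * (k.factorization p) : ℕ) : ℂ) * (s - 1 / 2)) *
          (1 / ((p : ℂ) ^ s * (1 - (p : ℂ) ^ (s - 1))) +
            ((p : ℂ) - 1) / (((p : ℂ) - (p : ℂ) ^ s) * (1 - (p : ℂ) ^ (2 * s - 1))))) := by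
  have hpp : p.Prime := Nat.prime_of_mem_primeFactors hpk
  have hdvd : p ∣ k := Nat.dvd_of_mem_primeFactors hpk
  have hk0 : k ≠ 0 := by rintro rfl; simp at hpk
  haveI : Fact p.Prime := ⟨hpp⟩
  have hp2 : p ≠ 2 := by
    rintro rfl
    exact (Nat.not_even_iff_odd.mpr hk) (even_iff_two_dvd.mpr hdvd)
  obtain ⟨v, u, hu, hkv⟩ : ∃ v u, ¬ p ∣ u ∧ k = p ^ v * u :=
    Nat.exists_eq_pow_mul_and_not_dvd hk0 p hpp.ne_one
  have hfac : k.factorization p = v := by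
    have hu0 : u ≠ 0 := by rintro rfl; simp at hu
    rw [hkv, Nat.factorization_mul (pow_ne_zero _ hpp.ne_zero) hu0, hpp.factorization_pow]
    simp [Nat.factorization_eq_zero_of_not_dvd hu]
  rw [hfac]
  have hp0 : (p : ℂ) ≠ 0 := by exact_mod_cast hpp.ne_zero
  have hp1 : (1:ℝ) < p := by exact_mod_cast hpp.one_lt
  have hppos : (0:ℝ) < p := by linarith
  set X : ℂ := (p : ℂ) ^ s with hXdef
  have hX0 : X ≠ 0 := by rw [hXdef, Ne, cpow_eq_zero_iff]; simp [hp0]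
  have hnX : ‖X‖ = (p : ℝ) ^ s.re := by
    rw [hXdef]
    exact norm_natCast_cpow_of_pos hpp.pos s
  have hX1 : X ≠ p := by
    intro h
    have h3 : ‖X‖ = p := by rw [h]; simp
    rw [hnX] at h3
    have := Real.rpow_lt_rpow_of_exponent_lt hp1 hs2
    rw [h3, Real.rpow_one] at this
    exact lt_irrefl _ this
  have hX2 : X ^ 2 ≠ p := by
    intro h
    have h3 : ‖X ^ 2‖ = p := by rw [h]; simp
    rw [norm_pow, hnX, ← Real.rpow_natCast, ← Real.rpow_mul hppos.le] at h3
    have := Real.rpow_lt_rpow_of_exponent_lt hp1 (show (1:ℝ) < s.re * (2:ℕ) by push_cast; linarith)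
    rw [h3, Real.rpow_one] at this
    exact lt_irrefl _ this
  have hq1 : (p : ℂ) ^ (s - 1) = X / p := by
    rw [cpow_sub _ _ hp0, cpow_one]
  have hX2' : (p : ℂ) ^ (2 * s) = X ^ 2 := by
    have := cpow_nat_mul (p : ℂ) 2 s
    simpa using this
  have hq2 : (p : ℂ) ^ (2 * s - 1) = X ^ 2 / p := by
    rw [cpow_sub _ _ hp0, cpow_one, hX2']
  have hq3 : (p : ℂ) ^ (-((2 * v : ℕ) : ℂ) * (s - 1 / 2)) = ((p : ℂ) / X ^ 2) ^ v := by
    have : -((2 * v : ℕ) : ℂ) * (s - 1 / 2) = (v : ℂ) * (1 - 2 * s) := by push_cast; ring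
    rw [this, cpow_nat_mul, cpow_sub _ _ hp0, cpow_one, hX2']
  have hsq : (Real.sqrt p : ℂ) * Real.sqrt p = p := by
    norm_cast
    exact Real.mul_self_sqrt hppos.le
  have hsq0 : (Real.sqrt p : ℂ) ≠ 0 := by
    rw [Ne, ofReal_eq_zero]; positivity
  set c : ℂ := (X * Real.sqrt p)⁻¹ with hc
  have hcj : ∀ j : ℕ, (p : ℂ) ^ (-(j : ℂ) * (s + 1 / 2)) = c ^ j := by
    intro j
    have : -(j : ℂ) * (s + 1 / 2) = (j : ℂ) * (-(s + 1 / 2)) := by ring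
    have h2 := s19_pow_half p hppos.le
    rw [ofReal_natCast] at h2
    rw [this, cpow_nat_mul, cpow_neg, cpow_add _ _ hp0, h2]
  set F : ℕ → ℂ := fun j => if 1 ≤ j then jacobiG (p ^ j) (k ^ 2) *
    (p : ℂ) ^ (-(j : ℂ) * (s + 1 / 2)) else 0 with hFdef
  have hFs : ∀ m, F (m + 1) = (if m + 1 ≤ 2 * v then (if Even m then 0 else (p : ℂ) ^ m * (p - 1))
      else if m = 2 * v then (p : ℂ) ^ m * (Real.sqrt p : ℂ) else 0) * c ^ (m + 1) := by
    intro m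
    simp only [hFdef]
    rw [if_pos (by omega), hkv, s19_G p hp2 v u hu m, hcj]
  have hF0 : F 0 = 0 := by simp [hFdef]
  have htsum : ∑' j, F j = ∑ j ∈ Finset.range (2 * v + 2), F j := by
    apply tsum_eq_sum
    intro j hj
    rw [Finset.mem_range] at hj
    obtain ⟨m, rfl⟩ : ∃ m, j = m + 1 := ⟨j - 1, by omega⟩
    rw [hFs, if_neg (by omega), if_neg (by omega), zero_mul]
  have hcU : (p : ℂ) ^ 2 * c ^ 2 = p / X ^ 2 := by
    rw [hc]
    field_simp
    linear_combination (-1 : ℂ) * hsq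
  have hS := s19_sum p v c (p / X ^ 2) hp0 F hcU hF0 (by
    intro m hm
    rw [hFs, if_pos hm]) v le_rfl
  have hlast : F (2 * v + 1) = ((p : ℂ) / X ^ 2) ^ v / X := by
    rw [hFs, if_neg (by omega), if_pos rfl, ← hcU, mul_pow, ← pow_mul, ← pow_mul, pow_succ c]
    rw [hc]
    field_simp
  rw [htsum, Finset.sum_range_succ, hlast, hq1, hq2, hq3]
  exact s19_alg p X _ _ hp0 hX0 hX1 hX2 hS

/-- explicit evaluation of the local factors
`∏_{p|k} (1 + (1-p^{s-1})^{-1} Σ_{j≥1} G((·/p^j),k²) p^{-j(s+1/2)})` for odd `k`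
and `1/2 < Re s < 1`, with `α_p = 2·v_p(k)`. -/
theorem statement19
    (k : ℕ) (hk : Odd k) (hk1 : 1 ≤ k)
    (s : ℂ) (hs1 : 1 / 2 < s.re) (hs2 : s.re < 1) :
    (∏ p ∈ k.primeFactors,
      (1 + (1 - (p : ℂ) ^ (s - 1))⁻¹ *
        ∑' j : ℕ, if 1 ≤ j then jacobiG (p ^ j) (k ^ 2) * (p : ℂ) ^ (-(j : ℂ) * (s + 1 / 2))
          else 0)) =
    ∏ p ∈ k.primeFactors,
      (1 + ((p : ℂ) - 1) / (((p : ℂ) ^ s - (p : ℂ)) * (1 - (p : ℂ) ^ (2 * s - 1))) +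
        (p : ℂ) ^ (-((2 * (k.factorization p) : ℕ) : ℂ) * (s - 1 / 2)) *
          (1 / ((p : ℂ) ^ s * (1 - (p : ℂ) ^ (s - 1))) +
            ((p : ℂ) - 1) / (((p : ℂ) - (p : ℂ) ^ s) * (1 - (p : ℂ) ^ (2 * s - 1))))) := by
  exact Finset.prod_congr rfl fun p hp => s19_local k p hk hp s hs1 hs2
end
end
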